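/- arXiv:2403.05270 — 5 statements merged into one kernel-verified Lean document; each statement's English description precedes it below -/
import Mathlib

section
/- For every integer n ≥ 4 there exists a family F of n pairwise intersecting, pairwise distinct circles in the plane ℝ² such that exactly 2n − 2 unordered pairs of circles of F create a lens in the arrangement A(F). -/
open Metric Set

noncomputable section

/-- The Euclidean plane ℝ². -/
abbrev Plane := EuclideanSpace ℝ (Fin 2)

/-- A circle in the plane: a center and a positive radius. -/
structure Circle2 where
  center : Plane
  radius : ℝ
  radius_pos : 0 < radius

instance : DecidableEq Circle2 := Classical.decEq _

/-- The circle itself, as a set of points. -/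
def Circle2.sphere (C : Circle2) : Set Plane := Metric.sphere C.center C.radius

/-- The closed disc bounded by the circle. -/
def Circle2.disc (C : Circle2) : Set Plane := Metric.closedBall C.center C.radius

/-- Two circles of the family `F` create a lens in the arrangement `A(F)` if they
intersect in exactly two points and the interior of the intersection of their closed
discs is disjoint from every circle of `F`. -/
def CreatesLens (F : Finset Circle2) (C1 C2 : Circle2) : Prop :=
  (C1.sphere ∩ C2.sphere).ncard = 2 ∧
    ∀ C ∈ F, interior (C1.disc ∩ C2.disc) ∩ C.sphere = ∅

/-- Counting lemma: the pairs related by `L` are exactly `AB`, all `A D_i`, all `B D_i`, and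
`D_0 D_{m-1}`. -/
lemma count_pairs {α : Type*} [DecidableEq α] (A B : α) (D : ℕ → α)
    (hD : Function.Injective D) (hAB : A ≠ B) (hA : ∀ i, D i ≠ A) (hB : ∀ i, D i ≠ B)
    (m : ℕ) (hm : 2 ≤ m) (L : α → α → Prop) (hsymm : ∀ x y, L x y → L y x)
    (LAB : L A B) (LA : ∀ i < m, L A (D i)) (LB : ∀ i < m, L B (D i))
    (LD : L (D 0) (D (m - 1)))
    (LN : ∀ i j, i < j → j < m → L (D i) (D j) → i = 0 ∧ j = m - 1) :
    {s : Sym2 α | ∃ C1 C2 : α, C1 ∈ insert A (insert B ((Finset.range m).image D)) ∧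
      C2 ∈ insert A (insert B ((Finset.range m).image D)) ∧ C1 ≠ C2 ∧
        s = s(C1, C2) ∧ L C1 C2}.ncard = 2 * (m + 2) - 2 := by
  have key : {s : Sym2 α | ∃ C1 C2 : α, C1 ∈ insert A (insert B ((Finset.range m).image D)) ∧
      C2 ∈ insert A (insert B ((Finset.range m).image D)) ∧ C1 ≠ C2 ∧
        s = s(C1, C2) ∧ L C1 C2} =
      ((insert s(A, B) (insert s(D 0, D (m - 1))
        ((Finset.range m).image (fun i => s(A, D i)) ∪
          (Finset.range m).image (fun i => s(B, D i)))) : Finset (Sym2 α)) : Set (Sym2 α)) := by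
    ext s
    simp only [Set.mem_ofPred_eq, Finset.mem_insert, Finset.mem_image, Finset.mem_range,
      Finset.coe_insert, Finset.coe_union, Finset.coe_image, Set.mem_insert_iff, Set.mem_union,
      Set.mem_image, Finset.coe_range, Set.mem_Iio]
    constructor
    · rintro ⟨C1, C2, h1, h2, hne, rfl, hL⟩
      rcases h1 with rfl | rfl | ⟨i, hi, rfl⟩ <;> rcases h2 with rfl | rfl | ⟨j, hj, rfl⟩
      · exact absurd rfl hne
      · left; rfl
      · right; right; left; exact ⟨j, hj, rfl⟩
      · left; exact Sym2.eq_swap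
      · exact absurd rfl hne
      · right; right; right; exact ⟨j, hj, rfl⟩
      · right; right; left; exact ⟨i, hi, Sym2.eq_swap⟩
      · right; right; right; exact ⟨i, hi, Sym2.eq_swap⟩
      · right; left
        rcases lt_trichotomy i j with h | h | h
        · obtain ⟨rfl, rfl⟩ := LN i j h hj hL
          rfl
        · subst h; exact absurd rfl hne
        · obtain ⟨rfl, rfl⟩ := LN j i h hi (hsymm _ _ hL)
          exact Sym2.eq_swap
    · rintro (rfl | rfl | ⟨i, hi, rfl⟩ | ⟨i, hi, rfl⟩)
      · exact ⟨A, B, by simp, by simp, hAB, rfl, LAB⟩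
      · refine ⟨D 0, D (m - 1), Or.inr (Or.inr ⟨0, by omega, rfl⟩),
          Or.inr (Or.inr ⟨m - 1, by omega, rfl⟩), fun h => ?_, rfl, LD⟩
        have := hD h
        omega
      · exact ⟨A, D i, by simp, Or.inr (Or.inr ⟨i, hi, rfl⟩), (hA i).symm, rfl, LA i hi⟩
      · exact ⟨B, D i, by simp, Or.inr (Or.inr ⟨i, hi, rfl⟩), (hB i).symm, rfl, LB i hi⟩
  rw [key, Set.ncard_coe_finset]
  rw [Finset.card_insert_of_notMem, Finset.card_insert_of_notMem, Finset.card_union_of_disjoint,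
    Finset.card_image_of_injective, Finset.card_image_of_injective]
  · simp; omega
  · intro i j h
    simp only [Sym2.eq_iff] at h
    rcases h with ⟨_, h⟩ | ⟨h, _⟩
    · exact hD h
    · exact absurd h.symm (hB j)
  · intro i j h
    simp only [Sym2.eq_iff] at h
    rcases h with ⟨_, h⟩ | ⟨h, _⟩
    · exact hD h
    · exact absurd h.symm (hA j)
  · rw [Finset.disjoint_left]
    rintro s hs ht
    simp only [Finset.mem_image, Finset.mem_range] at hs ht
    obtain ⟨i, _, rfl⟩ := hs
    obtain ⟨j, _, h⟩ := ht
    simp only [Sym2.eq_iff] at h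
    rcases h with ⟨h, _⟩ | ⟨h, _⟩
    · exact hAB h.symm
    · exact hB i h.symm
  · simp only [Finset.mem_union, Finset.mem_image, Finset.mem_range, Sym2.eq_iff]
    rintro (⟨i, _, ⟨h, _⟩ | ⟨h, _⟩⟩ | ⟨i, _, ⟨h, _⟩ | ⟨h, _⟩⟩)
    · exact hA _ h.symm
    · exact hA _ h.symm
    · exact hB _ h.symm
    · exact hB _ h.symm
  · simp only [Finset.mem_insert, Finset.mem_union, Finset.mem_image, Finset.mem_range, Sym2.eq_iff]
    rintro ((⟨h, _⟩ | ⟨h, _⟩) | ⟨i, _, ⟨_, h⟩ | ⟨_, h⟩⟩ | ⟨i, _, ⟨h, _⟩ | ⟨_, h⟩⟩)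
    · exact hA _ h.symm
    · exact hA _ h.symm
    · exact hB _ h
    · exact hA _ h
    · exact hAB h.symm
    · exact hA _ h

lemma mem_sphere_iff (C : Circle2) (p : Plane) :
    p ∈ C.sphere ↔ (p 0 - C.center 0) ^ 2 + (p 1 - C.center 1) ^ 2 = C.radius ^ 2 := by
  have h := C.radius_pos
  rw [Circle2.sphere, Metric.mem_sphere, EuclideanSpace.dist_eq, Fin.sum_univ_two,
    Real.dist_eq, Real.dist_eq, sq_abs, sq_abs, Real.sqrt_eq_iff_eq_sq (by positivity) h.le]

lemma mem_interior_iff (C1 C2 : Circle2) (p : Plane) :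
    p ∈ interior (C1.disc ∩ C2.disc) ↔
      (p 0 - C1.center 0) ^ 2 + (p 1 - C1.center 1) ^ 2 < C1.radius ^ 2 ∧
      (p 0 - C2.center 0) ^ 2 + (p 1 - C2.center 1) ^ 2 < C2.radius ^ 2 := by
  have h1 := C1.radius_pos
  have h2 := C2.radius_pos
  rw [Circle2.disc, Circle2.disc, interior_inter, interior_closedBall _ h1.ne',
    interior_closedBall _ h2.ne', Set.mem_inter_iff, Metric.mem_ball, Metric.mem_ball,
    EuclideanSpace.dist_eq, EuclideanSpace.dist_eq, Fin.sum_univ_two, Fin.sum_univ_two,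
    Real.dist_eq, Real.dist_eq, Real.dist_eq, Real.dist_eq, sq_abs, sq_abs, sq_abs, sq_abs,
    Real.sqrt_lt' h1, Real.sqrt_lt' h2]

/-- Two properly crossing circles have exactly two common points. -/
lemma two_points (C1 C2 : Circle2) (a b d : ℝ) (ha : a = C2.center 0 - C1.center 0)
    (hb : b = C2.center 1 - C1.center 1) (hd : 0 < d) (hd2 : d ^ 2 = a ^ 2 + b ^ 2)
    (h1 : d < C1.radius + C2.radius) (h2 : C1.radius < d + C2.radius)
    (h3 : C2.radius < d + C1.radius) : (C1.sphere ∩ C2.sphere).ncard = 2 := by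
  set r := C1.radius with hr
  set s := C2.radius with hs
  have hpos : 0 < 4 * r ^ 2 * d ^ 2 - (r ^ 2 - s ^ 2 + d ^ 2) ^ 2 := by
    have : 4 * r ^ 2 * d ^ 2 - (r ^ 2 - s ^ 2 + d ^ 2) ^ 2 =
      ((r + d + s) * (d + r - s)) * ((d + s - r) * (r + s - d)) := by ring
    rw [this]
    have := C1.radius_pos
    have := C2.radius_pos
    apply mul_pos <;> apply mul_pos <;> linarith
  obtain ⟨l, hl⟩ : ∃ l : ℝ, 2 * l * d ^ 2 = r ^ 2 - s ^ 2 + d ^ 2 :=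
    ⟨(r ^ 2 - s ^ 2 + d ^ 2) / (2 * d ^ 2), by field_simp⟩
  obtain ⟨u, hu, hu2⟩ : ∃ u : ℝ, 0 < u ∧ (u ^ 2 + l ^ 2) * d ^ 2 = r ^ 2 := by
    have h : 0 < r ^ 2 / d ^ 2 - l ^ 2 := by
      rw [← hl] at hpos
      have : l ^ 2 * d ^ 2 < r ^ 2 := by
        have hd2 : 0 < d ^ 2 := by positivity
        nlinarith
      rw [sub_pos, lt_div_iff₀ (by positivity)]
      exact this
    refine ⟨√(r ^ 2 / d ^ 2 - l ^ 2), Real.sqrt_pos.2 h, ?_⟩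
    rw [Real.sq_sqrt h.le]
    field_simp
    ring
  have hc0 : C2.center 0 = C1.center 0 + a := by rw [ha]; ring
  have hc1 : C2.center 1 = C1.center 1 + b := by rw [hb]; ring
  rw [Set.ncard_eq_two]
  refine ⟨!₂[C1.center 0 + l * a - u * b, C1.center 1 + l * b + u * a],
    !₂[C1.center 0 + l * a + u * b, C1.center 1 + l * b - u * a], ?_, ?_⟩
  · intro h
    have e0 := congrArg (fun p : Plane => p 0) h
    have e1 := congrArg (fun p : Plane => p 1) h
    simp at e0 e1
    have hb0 : u * b = 0 := by linarith
    have ha0 : u * a = 0 := by linarith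
    have hb0 : b = 0 := by simpa [hu.ne'] using hb0
    have ha0 : a = 0 := by simpa [hu.ne'] using ha0
    rw [ha0, hb0] at hd2
    have : 0 < d ^ 2 := by positivity
    linarith
  · ext p
    rw [Set.mem_inter_iff, mem_sphere_iff, mem_sphere_iff, hc0, hc1, ← hr, ← hs]
    constructor
    · rintro ⟨e1, e2⟩
      obtain ⟨x, hx⟩ : ∃ x, x = p 0 - C1.center 0 := ⟨_, rfl⟩
      obtain ⟨y, hy⟩ : ∃ y, y = p 1 - C1.center 1 := ⟨_, rfl⟩
      have e1' : x ^ 2 + y ^ 2 = r ^ 2 := by rw [hx, hy]; exact e1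
      have e2' : (x - a) ^ 2 + (y - b) ^ 2 = s ^ 2 := by
        rw [hx, hy, ← e2]; ring
      have dot : x * a + y * b = l * d ^ 2 := by nlinarith
      have crs : (a * y - b * x) ^ 2 = (u * d ^ 2) ^ 2 := by
        have : (a * y - b * x) ^ 2 = (x ^ 2 + y ^ 2) * (a ^ 2 + b ^ 2) - (x * a + y * b) ^ 2 := by
          ring
        rw [this, dot, e1', ← hd2, ← hu2]; ring
      have hdd : d ^ 2 ≠ 0 := by positivity
      rcases sq_eq_sq_iff_eq_or_eq_neg.1 crs with h | h
      · left
        have hx' : x = l * a - u * b := by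
          apply mul_right_cancel₀ hdd
          have : x * d ^ 2 = (x * a + y * b) * a - (a * y - b * x) * b := by rw [hd2]; ring
          rw [this, dot, h]; ring
        have hy' : y = l * b + u * a := by
          apply mul_right_cancel₀ hdd
          have : y * d ^ 2 = (x * a + y * b) * b + (a * y - b * x) * a := by rw [hd2]; ring
          rw [this, dot, h]; ring
        ext i
        fin_cases i
        · simp; linarith
        · simp; linarith
      · right
        have hx' : x = l * a + u * b := by
          apply mul_right_cancel₀ hdd
          have : x * d ^ 2 = (x * a + y * b) * a - (a * y - b * x) * b := by rw [hd2]; ring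
          rw [this, dot, h]; ring
        have hy' : y = l * b - u * a := by
          apply mul_right_cancel₀ hdd
          have : y * d ^ 2 = (x * a + y * b) * b + (a * y - b * x) * a := by rw [hd2]; ring
          rw [this, dot, h]; ring
        rw [Set.mem_singleton_iff]
        ext i
        fin_cases i
        · simp; linarith
        · simp; linarith
    · rintro (rfl | h)
      · simp
        constructor
        · rw [← hu2, hd2]; ring
        · have : s ^ 2 = r ^ 2 + d ^ 2 - 2 * l * d ^ 2 := by linarith
          rw [this, ← hu2, hd2]; ring
      · rw [Set.mem_singleton_iff] at h
        subst h
        simp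
        constructor
        · rw [← hu2, hd2]; ring
        · have : s ^ 2 = r ^ 2 + d ^ 2 - 2 * l * d ^ 2 := by linarith
          rw [this, ← hu2, hd2]; ring

/-- The hypotenuse with legs `t` and `1`. -/
def hyp (t : ℝ) : ℝ := √(t ^ 2 + 1)

lemma hyp_sq (t : ℝ) : hyp t ^ 2 = t ^ 2 + 1 := Real.sq_sqrt (by positivity)

lemma hyp_pos (t : ℝ) : 0 < hyp t := Real.sqrt_pos.2 (by positivity)

lemma hyp_gt_one {t : ℝ} (ht : 1 ≤ t) : 1.4 < hyp t := by
  have := hyp_sq t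
  have := hyp_pos t
  norm_num
  nlinarith

lemma hyp_lt_add (t : ℝ) (ht : 1 ≤ t) : hyp t < t + 1 := by
  have := hyp_sq t
  have := hyp_pos t
  nlinarith

lemma lt_hyp (t : ℝ) : t < hyp t := by
  have := hyp_sq t
  have := hyp_pos t
  nlinarith

/-- `hyp` is increasing and strictly 1-Lipschitz on positive reals. -/
lemma hyp_diff {t s : ℝ} (ht : 1 ≤ t) (h : t < s) : hyp t < hyp s ∧ hyp s - hyp t < s - t := by
  have h1 := hyp_sq t
  have h2 := hyp_pos t
  have h3 := hyp_sq s
  have h4 := hyp_pos s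
  have h5 := lt_hyp t
  have h6 := lt_hyp s
  have e : (hyp s - hyp t) * (hyp s + hyp t) = (s - t) * (s + t) := by nlinarith
  constructor
  · nlinarith
  · by_contra hc
    push Not at hc
    nlinarith

lemma hyp_mul (t s : ℝ) : 1 + t * s ≤ hyp t * hyp s := by
  have h1 := hyp_sq t
  have h2 := hyp_pos t
  have h3 := hyp_sq s
  have h4 := hyp_pos s
  refine le_of_abs_le (abs_le_of_sq_le_sq (by nlinarith [sq_nonneg (t - s), mul_pow (hyp t) (hyp s) 2]) (by positivity))
  
lemma hyp_convex {t0 t t1 : ℝ} (h0 : t0 < t) (h1 : t < t1) :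
    (t1 - t0) * hyp t ≤ (t1 - t) * hyp t0 + (t - t0) * hyp t1 := by
  have a1 := hyp_sq t
  have a2 := hyp_sq t0
  have a3 := hyp_sq t1
  have b2 := hyp_pos t0
  have b3 := hyp_pos t1
  have m := hyp_mul t0 t1
  refine le_of_abs_le (abs_le_of_sq_le_sq ?_ (by nlinarith))
  have k : 0 ≤ (t1 - t) * (t - t0) := by nlinarith
  have e : ((t1 - t) * hyp t0 + (t - t0) * hyp t1) ^ 2 - ((t1 - t0) * hyp t) ^ 2 = 2 * ((t1 - t) * (t - t0)) * (hyp t0 * hyp t1 - (1 + t0 * t1)) := by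
    have : ((t1 - t) * hyp t0 + (t - t0) * hyp t1) ^ 2 = (t1 - t) ^ 2 * hyp t0 ^ 2 + (t - t0) ^ 2 * hyp t1 ^ 2 + 2 * ((t1 - t) * (t - t0)) * (hyp t0 * hyp t1) := by ring
    rw [this, mul_pow, a1, a2, a3]; ring
  nlinarith [mul_nonneg k (sub_nonneg.2 m)]

/-- A point of the disc tangent to the unit circle satisfies a half-plane inequality. -/
lemma halfplane {t x y : ℝ} (ht : 1 ≤ t) (h : (x - t) ^ 2 + y ^ 2 ≤ (hyp t - 1) ^ 2) :
    hyp t ≤ x * t + (y + 1) := by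
  have h1 := hyp_sq t
  have h2 := hyp_gt_one ht
  have h3 : t * (t - x) - y ≤ hyp t * (hyp t - 1) := by
    refine le_of_abs_le (abs_le_of_sq_le_sq ?_ (by norm_num at h2; nlinarith))
    rw [mul_pow, h1]
    have : (t * (t - x) - y) ^ 2 ≤ (t ^ 2 + 1) * ((x - t) ^ 2 + y ^ 2) := by
      nlinarith [sq_nonneg (t * y + (t - x))]
    refine this.trans (mul_le_mul_of_nonneg_left h (by positivity))
  nlinarith

lemma sep_aux {t a b δ M : ℝ} (ht : t ^ 2 + 1 ≤ M) (hδ : 0 < δ) (hab : a ^ 2 + b ^ 2 ≤ 1 + δ)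
    (h1 : hyp t ≤ a * t + b) : (a - b * t) ^ 2 ≤ δ * M ∧ 1 ≤ a ^ 2 + b ^ 2 := by
  have e := hyp_sq t
  have p := hyp_pos t
  have k : t ^ 2 + 1 ≤ (a * t + b) ^ 2 := by nlinarith
  have i : (a * t + b) ^ 2 + (a - b * t) ^ 2 = (a ^ 2 + b ^ 2) * (t ^ 2 + 1) := by ring
  constructor
  · have : (a ^ 2 + b ^ 2) * (t ^ 2 + 1) ≤ (1 + δ) * (t ^ 2 + 1) :=
      mul_le_mul_of_nonneg_right hab (by positivity)
    have : δ * (t ^ 2 + 1) ≤ δ * M := mul_le_mul_of_nonneg_left ht hδ.le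
    nlinarith
  · by_contra hc
    push Not at hc
    have : (a ^ 2 + b ^ 2) * (t ^ 2 + 1) < 1 * (t ^ 2 + 1) :=
      mul_lt_mul_of_pos_right hc (by positivity)
    nlinarith [sq_nonneg (a - b * t)]

lemma sep {t s a b δ M : ℝ} (hts : 1 ≤ (s - t) ^ 2)
    (ht : t ^ 2 + 1 ≤ M) (hs : s ^ 2 + 1 ≤ M) (hδ : 0 < δ) (hδM : 15 * (δ * M ^ 2) ≤ 1)
    (hab : a ^ 2 + b ^ 2 ≤ 1 + δ)
    (h1 : hyp t ≤ a * t + b) (h2 : hyp s ≤ a * s + b) : False := by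
  obtain ⟨k1, k⟩ := sep_aux ht hδ hab h1
  obtain ⟨k2, -⟩ := sep_aux hs hδ hab h2
  have hM : 1 ≤ M := by nlinarith [sq_nonneg t]
  have hb : b ^ 2 ≤ 4 * (δ * M) := by
    have : (b * (s - t)) ^ 2 ≤ 4 * (δ * M) := by
      nlinarith [sq_nonneg ((a - b * t) + (a - b * s))]
    rw [mul_pow] at this
    nlinarith [sq_nonneg b]
  have ha : a ^ 2 ≤ 2 * (b * t) ^ 2 + 2 * (δ * M) := by
    nlinarith [sq_nonneg (a - b * t - b * t)]
  have hbt : (b * t) ^ 2 ≤ 4 * (δ * M) * (M - 1) := by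
    rw [mul_pow]
    apply mul_le_mul hb (by linarith) (by positivity) (by positivity)
  have hMM : δ * M ≤ δ * M ^ 2 := by nlinarith
  nlinarith [mul_pos hδ (by linarith : 0 < M)]

lemma far_origin {t x y δ : ℝ} (ht : 1 ≤ t) (hδ : δ ≤ 0.16) (hxy : x ^ 2 + y ^ 2 ≤ δ)
    (h : (x - t) ^ 2 + y ^ 2 ≤ (hyp t - 1) ^ 2) : False := by
  have e := hyp_sq t
  have p := hyp_pos t
  have hx : x ≤ 0.4 := by norm_num at *; nlinarith [sq_nonneg y]
  have k : hyp t - 1 ≤ 0.4 * t := by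
    norm_num at *
    nlinarith [sq_nonneg x, sq_nonneg y]
  norm_num at *
  nlinarith

def cA (ε : ℝ) (h : 0 < ε) : Circle2 := ⟨!₂[0, -1], 1 + ε, by linarith⟩

def cB (ε : ℝ) (h : 0 < ε) : Circle2 := ⟨!₂[0, 1], 1 + ε, by linarith⟩

/-- The parameter of the `i`-th small circle. -/
def par (i : ℕ) : ℝ := (i : ℝ) + 1

lemma one_le_par (i : ℕ) : 1 ≤ par i := by simp [par]

lemma par_lt {i j : ℕ} (h : i < j) : par i < par j := by
  simpa [par] using h

lemma par_sq {i m : ℕ} (h : i < m) : par i ^ 2 + 1 ≤ (m : ℝ) ^ 2 + 1 := by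
  have : par i ≤ m := by unfold par; exact_mod_cast h
  have := one_le_par i
  nlinarith

lemma par_sep {i j : ℕ} (h : i ≠ j) : 1 ≤ (par j - par i) ^ 2 := by
  have : (1 : ℤ) ≤ ((j : ℤ) - i) ^ 2 := by
    have : ((j : ℤ) - i) ≠ 0 := by omega
    have : 0 < ((j : ℤ) - i) ^ 2 := by positivity
    omega
  have h2 : (1 : ℝ) ≤ ((j : ℝ) - i) ^ 2 := by exact_mod_cast this
  unfold par
  nlinarith

def cD (i : ℕ) : Circle2 := ⟨!₂[par i, 0], hyp (par i) - 1, by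
  have := hyp_gt_one (one_le_par i); norm_num at this; linarith⟩

def fam (ε : ℝ) (h : 0 < ε) (m : ℕ) : Finset Circle2 :=
  insert (cA ε h) (insert (cB ε h) ((Finset.range m).image cD))

lemma mem_fam {ε : ℝ} {h : 0 < ε} {m : ℕ} {C : Circle2} :
    C ∈ fam ε h m ↔ C = cA ε h ∨ C = cB ε h ∨ ∃ i < m, cD i = C := by
  simp [fam]

lemma two_AB (ε : ℝ) (h : 0 < ε) : ((cA ε h).sphere ∩ (cB ε h).sphere).ncard = 2 := by
  apply two_points _ _ 0 2 2 <;> simp [cA, cB] <;> linarith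

lemma two_AD (ε : ℝ) (h : 0 < ε) (h' : ε < 0.1) (i : ℕ) :
    ((cA ε h).sphere ∩ (cD i).sphere).ncard = 2 := by
  have h1 := hyp_gt_one (one_le_par i)
  have h2 := hyp_sq (par i)
  norm_num at h1 h'
  apply two_points _ _ (par i) 1 (hyp (par i)) <;> (try simp [cA, cD]) <;> linarith

lemma two_BD (ε : ℝ) (h : 0 < ε) (h' : ε < 0.1) (i : ℕ) :
    ((cB ε h).sphere ∩ (cD i).sphere).ncard = 2 := by
  have h1 := hyp_gt_one (one_le_par i)
  have h2 := hyp_sq (par i)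
  norm_num at h1 h'
  apply two_points _ _ (par i) (-1) (hyp (par i)) <;> (try simp [cB, cD]) <;> linarith

lemma two_DD {i j : ℕ} (hij : i < j) :
    ((cD i).sphere ∩ (cD j).sphere).ncard = 2 := by
  have h1 := hyp_gt_one (one_le_par i)
  have h2 := hyp_diff (one_le_par i) (par_lt hij)
  have h3 := lt_hyp (par j)
  have h4 := one_le_par i
  have h5 := par_lt hij
  norm_num at h1
  apply two_points _ _ (par j - par i) 0 (par j - par i) <;> simp [cD] <;> linarith

lemma inter_comm' (C1 C2 : Circle2) (h : (C1.sphere ∩ C2.sphere).Nonempty) :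
    (C2.sphere ∩ C1.sphere).Nonempty := by
  rwa [Set.inter_comm]

lemma nonempty_of_two {C1 C2 : Circle2} (h : (C1.sphere ∩ C2.sphere).ncard = 2) :
    (C1.sphere ∩ C2.sphere).Nonempty := by
  rw [← Set.ncard_pos (Set.finite_of_ncard_ne_zero (by omega))]
  omega

lemma nonempty_self (C : Circle2) : (C.sphere ∩ C.sphere).Nonempty := by
  rw [Set.inter_self]
  refine ⟨!₂[C.center 0 + C.radius, C.center 1], ?_⟩
  rw [mem_sphere_iff]
  simp

lemma lens_symm (F : Finset Circle2) (C1 C2 : Circle2) (h : CreatesLens F C1 C2) :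
    CreatesLens F C2 C1 := by
  unfold CreatesLens at *
  rwa [Set.inter_comm C2.sphere, Set.inter_comm C2.disc]

lemma lens_of {F : Finset Circle2} {C1 C2 : Circle2} (h : (C1.sphere ∩ C2.sphere).ncard = 2)
    (h2 : ∀ C ∈ F, ∀ x y : ℝ,
      (x - C1.center 0) ^ 2 + (y - C1.center 1) ^ 2 < C1.radius ^ 2 →
      (x - C2.center 0) ^ 2 + (y - C2.center 1) ^ 2 < C2.radius ^ 2 →
      (x - C.center 0) ^ 2 + (y - C.center 1) ^ 2 = C.radius ^ 2 → False) :
    CreatesLens F C1 C2 := by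
  refine ⟨h, fun C hC => ?_⟩
  rw [Set.eq_empty_iff_forall_notMem]
  rintro p ⟨hp1, hp2⟩
  rw [mem_interior_iff] at hp1
  rw [mem_sphere_iff] at hp2
  exact h2 C hC _ _ hp1.1 hp1.2 hp2

lemma not_lens_of {F : Finset Circle2} {C1 C2 C : Circle2} (hC : C ∈ F) (x y : ℝ)
    (h1 : (x - C1.center 0) ^ 2 + (y - C1.center 1) ^ 2 < C1.radius ^ 2)
    (h2 : (x - C2.center 0) ^ 2 + (y - C2.center 1) ^ 2 < C2.radius ^ 2)
    (h3 : (x - C.center 0) ^ 2 + (y - C.center 1) ^ 2 = C.radius ^ 2) :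
    ¬ CreatesLens F C1 C2 := by
  intro h
  have := h.2 C hC
  rw [Set.eq_empty_iff_forall_notMem] at this
  apply this !₂[x, y]
  rw [Set.mem_inter_iff, mem_interior_iff, mem_sphere_iff]
  simpa using ⟨⟨h1, h2⟩, h3⟩

lemma lens_AB (ε : ℝ) (h : 0 < ε) (h' : ε < 0.05) (m : ℕ) :
    CreatesLens (fam ε h m) (cA ε h) (cB ε h) := by
  norm_num at h'
  refine lens_of (two_AB ε h) fun C hC x y hA hB hCC => ?_
  rcases mem_fam.1 hC with rfl | rfl | ⟨i, hi, rfl⟩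
  · exact absurd hCC hA.ne
  · exact absurd hCC hB.ne
  · simp [cA, cB, cD] at hA hB hCC
    refine far_origin (one_le_par i) (δ := 0.16) le_rfl (x := x) (y := y) ?_ hCC.le
    norm_num
    nlinarith

lemma lens_AD (ε : ℝ) (h : 0 < ε) (h' : ε < 0.05) (m : ℕ)
    (hM : 15 * ((2 * ε + ε ^ 2) * ((m : ℝ) ^ 2 + 1) ^ 2) ≤ 1) (i : ℕ) (hi : i < m) :
    CreatesLens (fam ε h m) (cA ε h) (cD i) := by
  norm_num at h'
  refine lens_of (two_AD ε h (by norm_num; linarith) i) fun C hC x y hA hB hCC => ?_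
  rcases mem_fam.1 hC with rfl | rfl | ⟨j, hj, rfl⟩
  · exact absurd hCC hA.ne
  · simp [cA, cB, cD] at hA hB hCC
    refine far_origin (one_le_par i) (δ := 0.16) le_rfl (x := x) (y := y) ?_ hB.le
    norm_num
    nlinarith
  · by_cases hij : i = j
    · subst hij
      exact absurd hCC hB.ne
    simp [cA, cB, cD] at hA hB hCC
    exact sep (par_sep hij) (par_sq hi) (par_sq hj) (by positivity) hM
      (a := x) (b := y + 1) (by linarith) (halfplane (one_le_par i) hB.le)
      (halfplane (one_le_par j) hCC.le)

lemma lens_BD (ε : ℝ) (h : 0 < ε) (h' : ε < 0.05) (m : ℕ)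
    (hM : 15 * ((2 * ε + ε ^ 2) * ((m : ℝ) ^ 2 + 1) ^ 2) ≤ 1) (i : ℕ) (hi : i < m) :
    CreatesLens (fam ε h m) (cB ε h) (cD i) := by
  norm_num at h'
  refine lens_of (two_BD ε h (by norm_num; linarith) i) fun C hC x y hA hB hCC => ?_
  rcases mem_fam.1 hC with rfl | rfl | ⟨j, hj, rfl⟩
  · simp [cA, cB, cD] at hA hB hCC
    refine far_origin (one_le_par i) (δ := 0.16) le_rfl (x := x) (y := y) ?_ hB.le
    norm_num
    nlinarith
  · exact absurd hCC hA.ne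
  · by_cases hij : i = j
    · subst hij
      exact absurd hCC hB.ne
    simp [cA, cB, cD] at hA hB hCC
    exact sep (par_sep hij) (par_sq hi) (par_sq hj) (by positivity) hM
      (a := x) (b := -y + 1) (by linarith) (halfplane (one_le_par i) (by rw [neg_sq]; exact hB.le))
      (halfplane (one_le_par j) (by rw [neg_sq]; exact hCC.le))

lemma lens_DD (ε : ℝ) (h : 0 < ε) (m : ℕ) (hm : 2 ≤ m)
    (hM : 15 * ((2 * ε + ε ^ 2) * ((m : ℝ) ^ 2 + 1) ^ 2) ≤ 1) :
    CreatesLens (fam ε h m) (cD 0) (cD (m - 1)) := by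
  refine lens_of (two_DD (by omega)) fun C hC x y hA hB hCC => ?_
  have hs : (0 : ℕ) ≠ m - 1 := by omega
  rcases mem_fam.1 hC with rfl | rfl | ⟨j, hj, rfl⟩
  · simp [cA, cD] at hA hB hCC
    exact sep (par_sep hs) (par_sq (by omega : 0 < m)) (par_sq (by omega : m - 1 < m))
      (by positivity) hM (a := x) (b := y + 1) (by linarith)
      (halfplane (one_le_par 0) hA.le) (halfplane (one_le_par _) hB.le)
  · simp [cB, cD] at hA hB hCC
    exact sep (par_sep hs) (par_sq (by omega : 0 < m)) (par_sq (by omega : m - 1 < m))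
      (by positivity) hM (a := x) (b := -y + 1) (by linarith)
      (halfplane (one_le_par 0) (by rw [neg_sq]; exact hA.le))
      (halfplane (one_le_par _) (by rw [neg_sq]; exact hB.le))
  · by_cases hj0 : j = 0
    · subst hj0
      exact absurd hCC hA.ne
    by_cases hj1 : j = m - 1
    · subst hj1
      exact absurd hCC hB.ne
    simp [cD] at hA hB hCC
    have l0 := par_lt (by omega : 0 < j)
    have l1 := par_lt (by omega : j < m - 1)
    have c := hyp_convex l0 l1
    have a0 := hyp_sq (par 0)
    have a1 := hyp_sq (par (m - 1))
    have a := hyp_sq (par j)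
    generalize par 0 = t0 at *
    generalize par (m - 1) = t1 at *
    generalize par j = t at *
    have p0 : x ^ 2 + y ^ 2 - 2 * t0 * x + 2 * hyp t0 - 2 < 0 := by nlinarith
    have p1 : x ^ 2 + y ^ 2 - 2 * t1 * x + 2 * hyp t1 - 2 < 0 := by nlinarith
    have p : x ^ 2 + y ^ 2 - 2 * t * x + 2 * hyp t - 2 = 0 := by nlinarith
    have q0 := mul_neg_of_pos_of_neg (sub_pos.2 l1) p0
    have q1 := mul_neg_of_pos_of_neg (sub_pos.2 l0) p1
    have q : (t1 - t0) * (x ^ 2 + y ^ 2 - 2 * t * x + 2 * hyp t - 2) = 0 := by rw [p, mul_zero]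
    linarith

lemma mem_D {t x : ℝ} (h1 : t - hyp t + 1 < x) (h2 : x < t + hyp t - 1) :
    (x - t) ^ 2 < (hyp t - 1) ^ 2 := by
  apply sq_lt_sq' <;> linarith

lemma not_lens_DD (ε : ℝ) (h : 0 < ε) (m : ℕ) (i j : ℕ) (hij : i < j)
    (hj : j < m) (hL : CreatesLens (fam ε h m) (cD i) (cD j)) : i = 0 ∧ j = m - 1 := by
  have i1 := lt_hyp (par i)
  have j1 := lt_hyp (par j)
  have gi := hyp_gt_one (one_le_par i)
  have gj := hyp_gt_one (one_le_par j)
  have oi := one_le_par i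
  have oj := one_le_par j
  norm_num at gi gj
  by_contra hc
  by_cases hi : i = 0
  · have hj1 : j < m - 1 := by omega
    have dj := hyp_diff oj (par_lt hj1)
    have di := hyp_diff oi (par_lt (hij.trans hj1))
    have g1 := lt_hyp (par (m - 1))
    refine not_lens_of (C := cD (m - 1)) (mem_fam.2 (Or.inr (Or.inr ⟨m - 1, by omega, rfl⟩)))
      (par (m - 1) - hyp (par (m - 1)) + 1) 0 ?_ ?_ ?_ hL
    · simp only [cD]
      simp
      apply mem_D <;> linarith
    · simp only [cD]
      simp
      apply mem_D <;> linarith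
    · simp [cD]
      ring
  · have hi0 : 0 < i := by omega
    have di := hyp_diff (one_le_par 0) (par_lt hi0)
    have dj := hyp_diff (one_le_par 0) (par_lt (hi0.trans hij))
    have li := par_lt hi0
    have lj := par_lt (hi0.trans hij)
    have o := one_le_par 0
    have g := hyp_gt_one o
    norm_num at g
    refine not_lens_of (C := cD 0) (mem_fam.2 (Or.inr (Or.inr ⟨0, by omega, rfl⟩)))
      (par 0 + hyp (par 0) - 1) 0 ?_ ?_ ?_ hL
    · simp only [cD]
      simp
      apply mem_D <;> linarith
    · simp only [cD]
      simp
      apply mem_D <;> linarith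
    · simp [cD]
      ring

lemma cD_inj : Function.Injective cD := by
  intro i j h
  have := congrArg (fun C : Circle2 => C.center 0) h
  simpa [cD, par] using this

lemma cD_ne_A (ε : ℝ) (h : 0 < ε) (i : ℕ) : cD i ≠ cA ε h := by
  intro h
  have := congrArg (fun C : Circle2 => C.center 1) h
  simp [cD, cA] at this

lemma cD_ne_B (ε : ℝ) (h : 0 < ε) (i : ℕ) : cD i ≠ cB ε h := by
  intro h
  have := congrArg (fun C : Circle2 => C.center 1) h
  simp [cD, cB] at this

lemma cA_ne_B (ε : ℝ) (h : 0 < ε) : cA ε h ≠ cB ε h := by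
  intro h
  have := congrArg (fun C : Circle2 => C.center 1) h
  simp [cA, cB] at this
  linarith

/-- **Theorem (tightness).** For every `n ≥ 4` there is a family of `n` pairwise
intersecting, pairwise distinct circles in the plane with exactly `2n - 2` unordered
pairs of circles creating a lens in the arrangement. -/
theorem exists_family_with_two_n_sub_two_lenses (n : ℕ) (hn : 4 ≤ n) :
    ∃ F : Finset Circle2, F.card = n ∧
      (∀ C1 ∈ F, ∀ C2 ∈ F, (C1.sphere ∩ C2.sphere).Nonempty) ∧
      {s : Sym2 Circle2 | ∃ C1 C2 : Circle2, C1 ∈ F ∧ C2 ∈ F ∧ C1 ≠ C2 ∧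
        s = s(C1, C2) ∧ CreatesLens F C1 C2}.ncard = 2 * n - 2 := by
  obtain ⟨m, rfl⟩ : ∃ m, n = m + 2 := ⟨n - 2, by omega⟩
  have hm : 2 ≤ m := by omega
  obtain ⟨ε, h, h', hM⟩ : ∃ ε : ℝ, 0 < ε ∧ ε < 0.05 ∧
      15 * ((2 * ε + ε ^ 2) * ((m : ℝ) ^ 2 + 1) ^ 2) ≤ 1 := by
    have hK : (1 : ℝ) ≤ ((m : ℝ) ^ 2 + 1) ^ 2 := by nlinarith [sq_nonneg (m : ℝ)]
    generalize ((m : ℝ) ^ 2 + 1) ^ 2 = K at *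
    have hK0 : 0 < K := by linarith
    have e : 1 / (100 * K) * K = 1 / 100 := by field_simp
    have p : 0 < 1 / (100 * K) := by positivity
    refine ⟨1 / (100 * K), p, ?_, ?_⟩
    · norm_num1
      nlinarith
    · generalize 1 / (100 * K) = z at *
      have : z ≤ 1 := by nlinarith
      have : (2 * z + z ^ 2) * K = 2 * (z * K) + z * (z * K) := by ring
      rw [this, e]
      linarith
  have h1 : ε < 0.1 := by norm_num at *; linarith
  refine ⟨fam ε h m, ?_, ?_, ?_⟩
  · unfold fam
    rw [Finset.card_insert_of_notMem, Finset.card_insert_of_notMem,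
      Finset.card_image_of_injective _ cD_inj, Finset.card_range]
    · simp only [Finset.mem_image, not_exists, not_and]
      exact fun i _ => cD_ne_B ε h i
    · simp only [Finset.mem_insert, Finset.mem_image, not_or, not_exists, not_and]
      exact ⟨cA_ne_B ε h, fun i _ => cD_ne_A ε h i⟩
  · intro C1 hC1 C2 hC2
    rcases mem_fam.1 hC1 with rfl | rfl | ⟨i, hi, rfl⟩ <;>
      rcases mem_fam.1 hC2 with rfl | rfl | ⟨j, hj, rfl⟩
    · exact nonempty_self _
    · exact nonempty_of_two (two_AB ε h)
    · exact nonempty_of_two (two_AD ε h h1 j)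
    · exact inter_comm' _ _ (nonempty_of_two (two_AB ε h))
    · exact nonempty_self _
    · exact nonempty_of_two (two_BD ε h h1 j)
    · exact inter_comm' _ _ (nonempty_of_two (two_AD ε h h1 i))
    · exact inter_comm' _ _ (nonempty_of_two (two_BD ε h h1 i))
    · rcases lt_trichotomy i j with hij | rfl | hij
      · exact nonempty_of_two (two_DD hij)
      · exact nonempty_self _
      · exact inter_comm' _ _ (nonempty_of_two (two_DD hij))
  · exact count_pairs (cA ε h) (cB ε h) cD cD_inj (cA_ne_B ε h) (cD_ne_A ε h) (cD_ne_B ε h) m hm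
      (CreatesLens (fam ε h m)) (lens_symm _) (lens_AB ε h h' m) (lens_AD ε h h' m hM)
      (lens_BD ε h h' m hM) (lens_DD ε h m hm hM) (not_lens_DD ε h m)
end
end

section
/- Let C1, C2, C3 be pairwise distinct circles in the plane ℝ² that all pass through a common point M, and suppose every two of them touch, that is, each of the intersections C1 ∩ C2, C1 ∩ C3, C2 ∩ C3 consists of the single point M. Then some pair among them touches internally: there exist i ≠ j in {1,2,3} such that the closed disc bounded by C_i contains the closed disc bounded by C_j. -/
open Metric Set

noncomputable section

/-- Coordinate form of lying on a circle. -/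
lemma mem_sphere_coord (C : Circle2) (x : Plane) :
    x ∈ C.sphere ↔ (x 0 - C.center 0) ^ 2 + (x 1 - C.center 1) ^ 2 = C.radius ^ 2 := by
  have hr := C.radius_pos
  rw [Circle2.sphere, Metric.mem_sphere, EuclideanSpace.dist_eq, Fin.sum_univ_two,
    Real.sqrt_eq_iff_eq_sq (by positivity) hr.le, Real.dist_eq, Real.dist_eq, sq_abs, sq_abs]

/-- Touching circles have centers collinear with the touching point:
otherwise the reflection of `M` in the line of centers is a second common point. -/
lemma cross_zero (C D : Circle2) (M : Plane) (t : C.sphere ∩ D.sphere = {M}) :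
    (C.center 0 - M 0) * (D.center 1 - M 1) = (C.center 1 - M 1) * (D.center 0 - M 0) := by
  have hM : M ∈ C.sphere ∩ D.sphere := by rw [t]; rfl
  have h1 := (mem_sphere_coord C M).1 hM.1
  have h2 := (mem_sphere_coord D M).1 hM.2
  obtain ⟨a, ha⟩ : ∃ a, a = C.center 0 - M 0 := ⟨_, rfl⟩
  obtain ⟨b, hb⟩ : ∃ b, b = C.center 1 - M 1 := ⟨_, rfl⟩
  obtain ⟨p, hp⟩ : ∃ p, p = D.center 0 - M 0 := ⟨_, rfl⟩
  obtain ⟨q, hq⟩ : ∃ q, q = D.center 1 - M 1 := ⟨_, rfl⟩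
  have ea : C.center 0 = M 0 + a := by linarith
  have eb : C.center 1 = M 1 + b := by linarith
  have ep : D.center 0 = M 0 + p := by linarith
  have eq : D.center 1 = M 1 + q := by linarith
  rw [← ha, ← hb, ← hp, ← hq]
  by_contra hne
  have hd : (p - a) ^ 2 + (q - b) ^ 2 ≠ 0 := by
    intro h0
    have e1 : p = a := by nlinarith [sq_nonneg (p - a), sq_nonneg (q - b)]
    have e2 : q = b := by nlinarith [sq_nonneg (p - a), sq_nonneg (q - b)]
    apply hne
    rw [e1, e2]; ring
  obtain ⟨k, hk⟩ : ∃ k, k * ((p - a) ^ 2 + (q - b) ^ 2) = b * p - a * q :=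
    ⟨(b * p - a * q) / ((p - a) ^ 2 + (q - b) ^ 2), div_mul_cancel₀ _ hd⟩
  have hk0 : k ≠ 0 := by
    rintro rfl
    apply hne
    linarith
  let N : Plane := !₂[M 0 - 2 * k * (q - b), M 1 + 2 * k * (p - a)]
  have N0 : N 0 = M 0 - 2 * k * (q - b) := rfl
  have N1 : N 1 = M 1 + 2 * k * (p - a) := rfl
  have hN : N ∈ C.sphere ∩ D.sphere := by
    constructor
    · rw [mem_sphere_coord, ← h1, N0, N1, ea, eb]
      linear_combination 4 * k * hk
    · rw [mem_sphere_coord, ← h2, N0, N1, ep, eq]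
      linear_combination 4 * k * hk
  rw [t, mem_singleton_iff] at hN
  rw [hN] at N0 N1
  apply hd
  have e1 : q - b = 0 := by
    have : k * (q - b) = 0 := by linarith
    exact (mul_eq_zero.1 this).resolve_left hk0
  have e2 : p - a = 0 := by
    have : k * (p - a) = 0 := by linarith
    exact (mul_eq_zero.1 this).resolve_left hk0
  rw [e1, e2]; ring

/-- If the centers lie on the same side of `M`, the touching is internal. -/
lemma internal_of_dot_pos (C D : Circle2) (M : Plane) (t : C.sphere ∩ D.sphere = {M})
    (hpos : 0 < (C.center 0 - M 0) * (D.center 0 - M 0)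
      + (C.center 1 - M 1) * (D.center 1 - M 1)) :
    C.disc ⊆ D.disc ∨ D.disc ⊆ C.disc := by
  have hM : M ∈ C.sphere ∩ D.sphere := by rw [t]; rfl
  have h1 := (mem_sphere_coord C M).1 hM.1
  have h2 := (mem_sphere_coord D M).1 hM.2
  have hc := cross_zero C D M t
  have hr := C.radius_pos
  have hs := D.radius_pos
  have hdot : (C.center 0 - M 0) * (D.center 0 - M 0)
      + (C.center 1 - M 1) * (D.center 1 - M 1) = C.radius * D.radius := by
    have hrs : 0 < C.radius * D.radius := by positivity
    rw [← sq_eq_sq₀ hpos.le hrs.le, mul_pow, ← h1, ← h2]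
    linear_combination (-((C.center 0 - M 0) * (D.center 1 - M 1)
      - (C.center 1 - M 1) * (D.center 0 - M 0))) * hc
  have hdist : dist C.center D.center = |C.radius - D.radius| := by
    rw [EuclideanSpace.dist_eq, Fin.sum_univ_two, ← Real.sqrt_sq_eq_abs,
      Real.dist_eq, Real.dist_eq, sq_abs, sq_abs]
    congr 1
    linear_combination h1 + h2 - 2 * hdot
  rcases le_total C.radius D.radius with h | h
  · left
    apply Metric.closedBall_subset_closedBall'
    rw [hdist, abs_of_nonpos (by linarith)]
    linarith
  · right
    apply Metric.closedBall_subset_closedBall'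
    rw [dist_comm, hdist, abs_of_nonneg (by linarith)]
    linarith

/-- **Lemma.** Three pairwise distinct circles passing through a common point `M` and
pairwise touching (each pairwise intersection is exactly `{M}`) cannot pairwise touch
externally: some pair touches internally, i.e. one closed disc contains another. -/
theorem three_mutually_touching_some_internal (C1 C2 C3 : Circle2)
    (h12 : C1 ≠ C2) (h13 : C1 ≠ C3) (h23 : C2 ≠ C3) (M : Plane)
    (t12 : C1.sphere ∩ C2.sphere = {M})
    (t13 : C1.sphere ∩ C3.sphere = {M})
    (t23 : C2.sphere ∩ C3.sphere = {M}) :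
    C1.disc ⊆ C2.disc ∨ C2.disc ⊆ C1.disc ∨ C1.disc ⊆ C3.disc ∨
      C3.disc ⊆ C1.disc ∨ C2.disc ⊆ C3.disc ∨ C3.disc ⊆ C2.disc := by
  by_cases p12 : 0 < (C1.center 0 - M 0) * (C2.center 0 - M 0)
      + (C1.center 1 - M 1) * (C2.center 1 - M 1)
  · have := internal_of_dot_pos C1 C2 M t12 p12
    tauto
  by_cases p13 : 0 < (C1.center 0 - M 0) * (C3.center 0 - M 0)
      + (C1.center 1 - M 1) * (C3.center 1 - M 1)
  · have := internal_of_dot_pos C1 C3 M t13 p13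
    tauto
  suffices p23 : 0 < (C2.center 0 - M 0) * (C3.center 0 - M 0)
      + (C2.center 1 - M 1) * (C3.center 1 - M 1) by
    have := internal_of_dot_pos C2 C3 M t23 p23
    tauto
  have hM : M ∈ C1.sphere ∩ C2.sphere := by rw [t12]; rfl
  have hM' : M ∈ C1.sphere ∩ C3.sphere := by rw [t13]; rfl
  have h1 := (mem_sphere_coord C1 M).1 hM.1
  have h2 := (mem_sphere_coord C2 M).1 hM.2
  have h3 := (mem_sphere_coord C3 M).1 hM'.2
  have c12 := cross_zero C1 C2 M t12
  have c13 := cross_zero C1 C3 M t13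
  have r1 := pow_pos C1.radius_pos 2
  have r2 := pow_pos C2.radius_pos 2
  have r3 := pow_pos C3.radius_pos 2
  rw [← h1] at r1
  rw [← h2] at r2
  rw [← h3] at r3
  generalize C1.center 0 = a0 at *
  generalize C1.center 1 = a1 at *
  generalize C2.center 0 = b0 at *
  generalize C2.center 1 = b1 at *
  generalize C3.center 0 = d0 at *
  generalize C3.center 1 = d1 at *
  generalize M 0 = m0 at *
  generalize M 1 = m1 at *
  have n12 : (a0 - m0) * (b0 - m0) + (a1 - m1) * (b1 - m1) < 0 := by
    refine lt_of_le_of_ne (not_lt.1 p12) fun h => ?_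
    have : ((m0 - a0) ^ 2 + (m1 - a1) ^ 2) * ((m0 - b0) ^ 2 + (m1 - b1) ^ 2) = 0 := by
      linear_combination ((a0 - m0) * (b0 - m0) + (a1 - m1) * (b1 - m1)) * h
        + ((a0 - m0) * (b1 - m1) - (a1 - m1) * (b0 - m0)) * c12
    exact (mul_pos r1 r2).ne' this
  have n13 : (a0 - m0) * (d0 - m0) + (a1 - m1) * (d1 - m1) < 0 := by
    refine lt_of_le_of_ne (not_lt.1 p13) fun h => ?_
    have : ((m0 - a0) ^ 2 + (m1 - a1) ^ 2) * ((m0 - d0) ^ 2 + (m1 - d1) ^ 2) = 0 := by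
      linear_combination ((a0 - m0) * (d0 - m0) + (a1 - m1) * (d1 - m1)) * h
        + ((a0 - m0) * (d1 - m1) - (a1 - m1) * (d0 - m0)) * c13
    exact (mul_pos r1 r3).ne' this
  have key : ((m0 - a0) ^ 2 + (m1 - a1) ^ 2) * ((b0 - m0) * (d0 - m0) + (b1 - m1) * (d1 - m1))
      = ((a0 - m0) * (b0 - m0) + (a1 - m1) * (b1 - m1))
        * ((a0 - m0) * (d0 - m0) + (a1 - m1) * (d1 - m1)) := by
    linear_combination ((a0 - m0) * (d1 - m1) - (a1 - m1) * (d0 - m0)) * c12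
  have := mul_pos_of_neg_of_neg n12 n13
  rw [← key] at this
  exact pos_of_mul_pos_right this r1.le
end
end

section
/- Let F be a finite family of pairwise distinct circles in the plane ℝ², all of which pass through two fixed distinct points p and q (a pencil of circles). Then at most one unordered pair of circles of F creates a lens in the arrangement A(F). -/
open Metric Set

noncomputable section

/-- A pencil of circles is parametrized by the line of centers. -/
lemma pencil_param (p q : Plane) (hpq : p ≠ q) :
    ∃ m n : Plane, n ≠ 0 ∧ ∀ C : Circle2, p ∈ C.sphere → q ∈ C.sphere →
      ∃ t : ℝ, C.center = m + t • n ∧ C.radius = ‖n‖ * √(1 / 4 + t ^ 2) := by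
  have hL : 0 < (q 0 - p 0) ^ 2 + (q 1 - p 1) ^ 2 := by
    by_contra h
    apply hpq
    have h0 : q 0 - p 0 = 0 := by nlinarith [sq_nonneg (q 0 - p 0), sq_nonneg (q 1 - p 1)]
    have h1 : q 1 - p 1 = 0 := by nlinarith [sq_nonneg (q 0 - p 0), sq_nonneg (q 1 - p 1)]
    ext i
    fin_cases i <;> simp <;> linarith
  refine ⟨!₂[(p 0 + q 0) / 2, (p 1 + q 1) / 2], !₂[-(q 1 - p 1), q 0 - p 0], ?_, ?_⟩
  · intro h
    have h0 := congrArg (fun v : Plane => v 0) h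
    have h1 := congrArg (fun v : Plane => v 1) h
    simp at h0 h1
    rw [show q 0 - p 0 = 0 from h1, show q 1 - p 1 = 0 by linarith] at hL
    norm_num at hL
  · intro C hp hq
    have hr := C.radius_pos
    simp only [Circle2.sphere, mem_sphere, EuclideanSpace.dist_eq, Fin.sum_univ_two,
      Real.dist_eq, sq_abs] at hp hq
    have hp2 : (p 0 - C.center 0) ^ 2 + (p 1 - C.center 1) ^ 2 = C.radius ^ 2 := by
      rw [← hp, Real.sq_sqrt (by positivity)]
    have hq2 : (q 0 - C.center 0) ^ 2 + (q 1 - C.center 1) ^ 2 = C.radius ^ 2 := by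
      rw [← hq, Real.sq_sqrt (by positivity)]
    clear hp hq
    generalize C.radius = r at *
    obtain ⟨t, ht⟩ : ∃ t : ℝ, t * ((q 0 - p 0) ^ 2 + (q 1 - p 1) ^ 2) =
      (C.center 0 - (p 0 + q 0) / 2) * (-(q 1 - p 1)) +
        (C.center 1 - (p 1 + q 1) / 2) * (q 0 - p 0) := ⟨_, div_mul_cancel₀ _ hL.ne'⟩
    have e0 : C.center 0 = (p 0 + q 0) / 2 + t * (-(q 1 - p 1)) := by
      apply mul_right_cancel₀ hL.ne'
      linear_combination (q 1 - p 1) * ht + (q 0 - p 0) / 2 * (hp2 - hq2)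
    have e1 : C.center 1 = (p 1 + q 1) / 2 + t * (q 0 - p 0) := by
      apply mul_right_cancel₀ hL.ne'
      linear_combination -(q 0 - p 0) * ht + (q 1 - p 1) / 2 * (hp2 - hq2)
    refine ⟨t, ?_, ?_⟩
    · ext i
      fin_cases i
      · simpa using e0
      · simpa using e1
    · rw [EuclideanSpace.norm_eq, ← Real.sqrt_mul (by positivity), eq_comm,
        Real.sqrt_eq_iff_mul_self_eq (by positivity) hr.le]
      simp only [Fin.sum_univ_two, Real.norm_eq_abs, sq_abs]
      rw [e0, e1] at hp2
      simp
      linear_combination hp2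

lemma mem_ball_of_lt (m n : Plane) (hn : n ≠ 0) (s t : ℝ) (hst : s < t) :
    m + (t - √(1 / 4 + t ^ 2)) • n ∈ ball (m + s • n) (‖n‖ * √(1 / 4 + s ^ 2)) := by
  have hn' : 0 < ‖n‖ := norm_pos_iff.mpr hn
  rw [mem_ball, dist_eq_norm, add_sub_add_left_eq_sub, ← sub_smul, norm_smul, mul_comm]
  apply mul_lt_mul_of_pos_left _ hn'
  rw [Real.norm_eq_abs, ← Real.sqrt_sq_eq_abs]
  apply Real.sqrt_lt_sqrt (sq_nonneg _)
  have h1 : √(1 / 4 + t ^ 2) ^ 2 = 1 / 4 + t ^ 2 := Real.sq_sqrt (by positivity)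
  have h2 : t < √(1 / 4 + t ^ 2) := Real.lt_sqrt_of_sq_lt (by linarith)
  nlinarith [mul_pos (sub_pos.mpr hst) (sub_pos.mpr h2)]

lemma not_lens (F : Finset Circle2) (m n : Plane) (hn : n ≠ 0) (t : Circle2 → ℝ)
    (ht : ∀ C ∈ F, C.center = m + t C • n ∧ C.radius = ‖n‖ * √(1 / 4 + t C ^ 2))
    (A B C : Circle2) (hA : A ∈ F) (hB : B ∈ F) (hC : C ∈ F)
    (hl : CreatesLens F A B) : t C ≤ t A ∨ t C ≤ t B := by
  by_contra! h
  have hx := hl.2 C hC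
  apply (Set.eq_empty_iff_forall_notMem.mp hx) (m + (t C - √(1 / 4 + t C ^ 2)) • n)
  refine ⟨?_, ?_⟩
  · rw [interior_inter]
    refine ⟨ball_subset_interior_closedBall ?_, ball_subset_interior_closedBall ?_⟩
    · rw [(ht A hA).1, (ht A hA).2]
      exact mem_ball_of_lt m n hn _ _ h.1
    · rw [(ht B hB).1, (ht B hB).2]
      exact mem_ball_of_lt m n hn _ _ h.2
  · rw [Circle2.sphere, (ht C hC).1, (ht C hC).2, mem_sphere, dist_eq_norm,
      add_sub_add_left_eq_sub, ← sub_smul, norm_smul, mul_comm, Real.norm_eq_abs,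
      sub_sub_cancel_left, abs_neg, abs_of_nonneg (Real.sqrt_nonneg _)]

/-- **Lemma (pencils).** In a pencil of circles (a finite family of pairwise distinct
circles all passing through two fixed distinct points `p` and `q`), at most one
unordered pair of circles creates a lens in the arrangement. -/
theorem pencil_at_most_one_lens (F : Finset Circle2) (p q : Plane) (hpq : p ≠ q)
    (hthrough : ∀ C ∈ F, p ∈ C.sphere ∧ q ∈ C.sphere) :
    {s : Sym2 Circle2 | ∃ C1 C2 : Circle2, C1 ∈ F ∧ C2 ∈ F ∧ C1 ≠ C2 ∧
      s = s(C1, C2) ∧ CreatesLens F C1 C2}.ncard ≤ 1 := by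
  obtain ⟨m, n, hn, h⟩ := pencil_param p q hpq
  have h' : ∀ C : Circle2, ∃ t : ℝ, C ∈ F →
      C.center = m + t • n ∧ C.radius = ‖n‖ * √(1 / 4 + t ^ 2) := by
    intro C
    by_cases hC : C ∈ F
    · obtain ⟨t, ht⟩ := h C (hthrough C hC).1 (hthrough C hC).2
      exact ⟨t, fun _ => ht⟩
    · exact ⟨0, fun h => absurd h hC⟩
  choose t ht using h'
  have hinj : ∀ A ∈ F, ∀ B ∈ F, t A = t B → A = B := by
    intro A hA B hB hAB
    have a := ht A hA
    have b := ht B hB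
    rw [hAB] at a
    cases A; cases B
    simp only [Circle2.mk.injEq]
    exact ⟨a.1.trans b.1.symm, a.2.trans b.2.symm⟩
  have up := not_lens F m n hn t ht
  have dn := not_lens F m (-n) (neg_ne_zero.mpr hn) (fun C => - t C) (by
    intro C hC
    simpa using ht C hC)
  simp only [neg_le_neg_iff] at dn
  have hs : {s : Sym2 Circle2 | ∃ C1 C2 : Circle2, C1 ∈ F ∧ C2 ∈ F ∧ C1 ≠ C2 ∧
      s = s(C1, C2) ∧ CreatesLens F C1 C2}.Subsingleton := by
    rintro _ ⟨A, B, hA, hB, hAB, rfl, hl⟩ _ ⟨C, D, hC, hD, hCD, rfl, hl'⟩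
    have nAB : t A ≠ t B := fun e => hAB (hinj A hA B hB e)
    have nCD : t C ≠ t D := fun e => hCD (hinj C hC D hD e)
    have u1 := up A B C hA hB hC hl
    have u2 := up A B D hA hB hD hl
    have u3 := up C D A hC hD hA hl'
    have u4 := up C D B hC hD hB hl'
    have d1 := dn A B C hA hB hC hl
    have d2 := dn A B D hA hB hD hl
    have d3 := dn C D A hC hD hA hl'
    have d4 := dn C D B hC hD hB hl'
    have key : (t A = t C ∧ t B = t D) ∨ (t A = t D ∧ t B = t C) := by
      clear up dn hinj ht
      grind
    rw [Sym2.eq_iff]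
    rcases key with ⟨e1, e2⟩ | ⟨e1, e2⟩
    · exact Or.inl ⟨hinj A hA C hC e1, hinj B hB D hD e2⟩
    · exact Or.inr ⟨hinj A hA D hD e1, hinj B hB C hC e2⟩
  exact (Set.ncard_le_one hs.finite).mpr fun a ha b hb => hs ha hb
end
end

section
/- Let F be a finite family of pairwise distinct circles in the plane ℝ², let {C1, C2} be a pair of circles of F creating a lens in the arrangement A(F), with D1 the closed disc bounded by C1, and let C3 ∈ F be a circle distinct from C1 and C2 that intersects C2 in exactly two points. Then no intersection point of C2 and C3 lies in the interior of D1; that is, C2 ∩ C3 ∩ interior(D1) = ∅. -/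
open Metric Set

noncomputable section

theorem dist_lt_iff_coord (x y : Plane) (r : ℝ) (hr : 0 < r) :
    dist x y < r ↔ (x 0 - y 0) ^ 2 + (x 1 - y 1) ^ 2 < r ^ 2 := by
  rw [EuclideanSpace.dist_eq, Real.sqrt_lt' hr]
  simp [Fin.sum_univ_two, Real.dist_eq, sq_abs]

theorem dist_eq_iff_coord (x y : Plane) (r : ℝ) (hr : 0 < r) :
    dist x y = r ↔ (x 0 - y 0) ^ 2 + (x 1 - y 1) ^ 2 = r ^ 2 := by
  rw [EuclideanSpace.dist_eq, Real.sqrt_eq_iff_eq_sq (by positivity) hr.le]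
  simp [Fin.sum_univ_two, Real.dist_eq, sq_abs]

/-- **Lemma.** If `{C1, C2}` creates a lens in the arrangement of `F` and `C3 ∈ F` is
a circle distinct from `C1` and `C2` meeting `C2` in exactly two points, then no
intersection point of `C2` and `C3` lies in the interior of the closed disc `D1`:
the edge `C2 ∩ D1` of the lens has no intersection points in its relative interior. -/
theorem no_crossing_inside_lens_edge (F : Finset Circle2) (C1 C2 C3 : Circle2)
    (h1 : C1 ∈ F) (h2 : C2 ∈ F) (h3 : C3 ∈ F) (h12 : C1 ≠ C2)
    (h31 : C3 ≠ C1) (h32 : C3 ≠ C2)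
    (hlens : CreatesLens F C1 C2)
    (hcross : (C2.sphere ∩ C3.sphere).ncard = 2) :
    C2.sphere ∩ C3.sphere ∩ interior C1.disc = ∅ := by
  rw [Set.eq_empty_iff_forall_notMem]
  rintro p ⟨⟨hp2, hp3⟩, hp1⟩
  obtain ⟨q, hq, hqp⟩ := Set.exists_ne_of_one_lt_ncard (by rw [hcross]; norm_num) p
  obtain ⟨hq2, hq3⟩ := hq
  have hl := hlens.2 C3 h3
  rw [Set.eq_empty_iff_forall_notMem] at hl
  obtain ⟨c1, r1, hr1⟩ := C1
  obtain ⟨c2, r2, hr2⟩ := C2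
  obtain ⟨c3, r3, hr3⟩ := C3
  simp only [Circle2.sphere, Circle2.disc, interior_inter, interior_closedBall _ hr1.ne',
    interior_closedBall _ hr2.ne', Set.mem_inter_iff, Metric.mem_sphere, Metric.mem_ball,
    dist_lt_iff_coord _ _ _ hr1, dist_lt_iff_coord _ _ _ hr2, dist_eq_iff_coord _ _ _ hr2,
    dist_eq_iff_coord _ _ _ hr3] at hp1 hp2 hp3 hq2 hq3 hl
  obtain ⟨a, ha⟩ : ∃ a, a = p 0 - c3 0 := ⟨_, rfl⟩
  obtain ⟨b, hb⟩ : ∃ b, b = p 1 - c3 1 := ⟨_, rfl⟩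
  obtain ⟨e, he⟩ : ∃ e, e = c3 0 - c2 0 := ⟨_, rfl⟩
  obtain ⟨f, hf⟩ : ∃ f, f = c3 1 - c2 1 := ⟨_, rfl⟩
  obtain ⟨B, hB⟩ : ∃ B, B = a * f - b * e := ⟨_, rfl⟩
  obtain ⟨A, hA⟩ : ∃ A, A = a * e + b * f := ⟨_, rfl⟩
  have hp0 : p 0 = c3 0 + a := by linarith
  have hp1' : p 1 = c3 1 + b := by linarith
  have hc0 : c2 0 = c3 0 - e := by linarith
  have hc1 : c2 1 = c3 1 - f := by linarith
  have hB0 : B ≠ 0 := by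
    intro hB0
    obtain ⟨w, hw⟩ : ∃ w, w = q 0 - p 0 := ⟨_, rfl⟩
    obtain ⟨z, hz⟩ : ∃ z, z = q 1 - p 1 := ⟨_, rfl⟩
    have hq0 : q 0 = c3 0 + a + w := by linarith
    have hq1 : q 1 = c3 1 + b + z := by linarith
    rw [hq0, hq1] at hq2 hq3
    rw [hp0, hp1'] at hp2 hp3
    rw [hc0, hc1] at hp2 hq2
    have hdw : e * w + f * z = 0 := by
      linear_combination (hq2 - hp2 - hq3 + hp3) / 2
    have hX : a * f = b * e := by linarith
    have h5 : e * (a * w + b * z) = 0 := by linear_combination a * hdw - z * hX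
    have h6 : f * (a * w + b * z) = 0 := by linear_combination b * hdw + w * hX
    have h7 : a * w + b * z = 0 := by
      by_contra h7
      have e0 : e = 0 := by simpa [h7] using h5
      have f0 : f = 0 := by simpa [h7] using h6
      apply h32
      have hc : c3 = c2 := by
        ext i
        fin_cases i
        · simp; linarith
        · simp; linarith
      have hr : r3 = r2 := by
        rw [← sq_eq_sq₀ hr3.le hr2.le, ← hp2, ← hp3, e0, f0]; ring
      subst hc hr
      rfl
    have h8 : w ^ 2 + z ^ 2 = 0 := by linear_combination hq3 - hp3 - 2 * h7
    have w0 : w = 0 := by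
      have : w ^ 2 = 0 := by linarith [sq_nonneg w, sq_nonneg z]
      exact pow_eq_zero_iff (two_ne_zero) |>.mp this
    have z0 : z = 0 := by
      have : z ^ 2 = 0 := by linarith [sq_nonneg w, sq_nonneg z]
      exact pow_eq_zero_iff (two_ne_zero) |>.mp this
    apply hqp
    ext i
    fin_cases i
    · simp; linarith
    · simp; linarith
  -- the rational parametrization of `C3` near `p`
  let X : ℝ → ℝ := fun s => c3 0 + ((1 - s ^ 2) * a - 2 * s * b) / (1 + s ^ 2)
  let Y : ℝ → ℝ := fun s => c3 1 + ((1 - s ^ 2) * b + 2 * s * a) / (1 + s ^ 2)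
  have hpos : ∀ s : ℝ, 1 + s ^ 2 ≠ 0 := fun s => by positivity
  have hXc : Continuous X := by
    refine continuous_const.add (Continuous.div (by fun_prop) (by fun_prop) hpos)
  have hYc : Continuous Y := by
    refine continuous_const.add (Continuous.div (by fun_prop) (by fun_prop) hpos)
  have ev1 : ∀ᶠ t : ℝ in nhds 0,
      (X (-(t * B)) - c1 0) ^ 2 + (Y (-(t * B)) - c1 1) ^ 2 < r1 ^ 2 := by
    refine ContinuousAt.eventually_lt (Continuous.continuousAt (by fun_prop))
      continuousAt_const ?_
    simp only [X, Y]
    rw [hp0, hp1'] at hp1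
    simpa using hp1
  have ev2 : ∀ᶠ t : ℝ in nhds 0, 0 < 1 + A * t := by
    refine ContinuousAt.eventually_lt continuousAt_const
      (Continuous.continuousAt (by fun_prop)) ?_
    simp
  obtain ⟨t, ⟨ht1, ht2⟩, ht⟩ := (((ev1.and ev2).filter_mono nhdsWithin_le_nhds).and
    (self_mem_nhdsWithin : Set.Ioi (0 : ℝ) ∈ nhdsWithin 0 (Set.Ioi 0))).exists
  have ht : 0 < t := ht
  obtain ⟨s, hs⟩ : ∃ s, s = -(t * B) := ⟨_, rfl⟩
  rw [← hs] at ht1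
  rw [hp0, hp1'] at hp2 hp3
  apply hl !₂[X s, Y s]
  refine ⟨⟨by simpa using ht1, ?_⟩, ?_⟩
  · have hBp : 0 < B ^ 2 := by positivity
    have key : (X s - c2 0) ^ 2 + (Y s - c2 1) ^ 2 - r2 ^ 2
        = - (4 * t * B ^ 2 * (1 + A * t) / (1 + s ^ 2)) := by
      rw [← hp2, hc0, hc1]
      simp only [X, Y]
      have := hpos s
      have hst : 4 * t * B ^ 2 * (1 + A * t) = - (4 * s * B - 4 * A * s ^ 2) := by
        rw [hs]; ring
      rw [hst, hA, hB]
      field_simp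
      ring
    have : 0 < 4 * t * B ^ 2 * (1 + A * t) / (1 + s ^ 2) := by positivity
    simp
    linarith
  · simp
    rw [← hp3]
    simp only [X, Y]
    have := hpos s
    field_simp
    ring
end
end

section
/- Let P be a set of n points in the plane ℝ² in general position (no three points of P collinear), and let E be a set of unordered pairs of points of P (the edges of a geometric graph on P, drawn as straight closed segments). If no two edges of E are avoiding, then |E| ≤ 2n − 2. -/
open Set

noncomputable section

/-- A set of points is in convex position if each point is a vertex of (i.e. is not in
the convex hull of the rest of) the set. -/
def ConvexPosition (s : Set Plane) : Prop :=
  ∀ x ∈ s, x ∉ convexHull ℝ (s \ {x})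

/-- `a, b, c, d` are the vertices, in this cyclic order, of a convex quadrilateral:
they are pairwise distinct, in convex position, and the diagonals `[a,c]` and `[b,d]`
cross. -/
def ConvexQuadrilateral (a b c d : Plane) : Prop :=
  a ≠ b ∧ a ≠ c ∧ a ≠ d ∧ b ≠ c ∧ b ≠ d ∧ c ≠ d ∧
  ConvexPosition {a, b, c, d} ∧
  (segment ℝ a c ∩ segment ℝ b d).Nonempty

/-- The closed segments `[a,b]` and `[c,d]` are avoiding: their endpoints are the
vertices of a convex quadrilateral in which the two segments are opposite sides. -/
def Avoiding (a b c d : Plane) : Prop :=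
  ConvexQuadrilateral a b c d ∨ ConvexQuadrilateral a b d c

/-- Twice the signed area of the triangle `p q r`. -/
def orient (p q r : Plane) : ℝ :=
  (q 0 - p 0) * (r 1 - p 1) - (q 1 - p 1) * (r 0 - p 0)

/-- The vector from `a` to `b` has direction angle `θ`. -/
def Dir (a b : Plane) (θ : ℝ) : Prop :=
  ∃ r : ℝ, 0 < r ∧ b 0 - a 0 = r * Real.cos θ ∧ b 1 - a 1 = r * Real.sin θ

lemma plane_ext {p q : Plane} (h0 : p 0 = q 0) (h1 : p 1 = q 1) : p = q := by
  ext i; fin_cases i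
  · exact h0
  · exact h1

lemma convex_half (x b : Plane) : Convex ℝ {p : Plane | orient x b p ≤ 0} := by
  intro p hp q hq s t hs ht hst
  simp only [Set.mem_ofPred_eq, orient, PiLp.add_apply, PiLp.smul_apply, smul_eq_mul] at *
  have ht' : t = 1 - s := by linarith
  subst ht'
  nlinarith [mul_nonneg hs (neg_nonneg.2 hp), mul_nonneg ht (neg_nonneg.2 hq)]

lemma not_mem_hull (p q r s : Plane) (h1 : 0 < orient p q s) (h2 : 0 < orient q r s)
    (T : Set Plane) (hT : T ⊆ {q, r, s}) : p ∉ convexHull ℝ T := by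
  intro hp
  have hsub : T ⊆ {z : Plane | orient q s z ≤ 0} := by
    intro z hz
    have hz' : z = q ∨ z = r ∨ z = s := hT hz
    show orient q s z ≤ 0
    rcases hz' with rfl | rfl | rfl
    · simp only [orient]; nlinarith
    · simp only [orient] at *; nlinarith
    · simp only [orient]; nlinarith
  have h : orient q s p ≤ 0 := convexHull_min hsub (convex_half q s) hp
  simp only [orient] at h h1
  nlinarith

lemma ne_of_orient {p q r : Plane} (h : 0 < orient p q r) : p ≠ q ∧ q ≠ r ∧ p ≠ r := by
  refine ⟨?_, ?_, ?_⟩ <;> rintro rfl <;> simp only [orient] at h <;> nlinarith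

lemma quad (p q r s : Plane) (h1 : 0 < orient p q s) (h2 : 0 < orient q r s)
    (h3 : 0 < orient p q r) (h4 : 0 < orient p r s) : ConvexQuadrilateral p s r q := by
  have n1 := ne_of_orient h1
  have n2 := ne_of_orient h2
  have n3 := ne_of_orient h3
  have h1' : 0 < orient q s p := by simp only [orient] at *; nlinarith
  have h2' : 0 < orient s q r := by simp only [orient] at *; nlinarith
  have h3' : 0 < orient q r p := by simp only [orient] at *; nlinarith
  have h4' : 0 < orient r s p := by simp only [orient] at *; nlinarith
  have h1'' : 0 < orient s p q := by simp only [orient] at *; nlinarith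
  have h2'' : 0 < orient r s q := by simp only [orient] at *; nlinarith
  have h3'' : 0 < orient r p q := by simp only [orient] at *; nlinarith
  have h4'' : 0 < orient s p r := by simp only [orient] at *; nlinarith
  refine ⟨n1.2.2, n3.2.2, n1.1, n2.2.1.symm, n1.2.1.symm, n2.1.symm, ?_, ?_⟩
  · intro x hx
    simp only [Set.mem_insert_iff, Set.mem_singleton_iff] at hx
    rcases hx with rfl | rfl | rfl | rfl
    · exact not_mem_hull _ q r s h1 h2 _ (by intro z; simp; tauto)
    · exact not_mem_hull _ p q r h4'' h3 _ (by intro z; simp; tauto)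
    · exact not_mem_hull _ s p q h2'' h1'' _ (by intro z; simp; tauto)
    · exact not_mem_hull _ r s p h3' h4' _ (by intro z; simp; tauto)
  · have hs : orient p q s + orient q r s = orient p q r + orient p r s := by
      simp only [orient]; ring
    have hpos : 0 < orient p q s + orient q r s := by linarith
    refine ⟨(orient q r s / (orient p q s + orient q r s)) • p +
      (orient p q s / (orient p q s + orient q r s)) • r, ?_, ?_⟩
    · exact ⟨_, _, by positivity, by positivity, by field_simp; ring, rfl⟩
    · refine ⟨orient p q r / (orient p q s + orient q r s),
        orient p r s / (orient p q s + orient q r s), by positivity, by positivity, ?_, ?_⟩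
      · rw [← add_div, ← hs, div_self hpos.ne']
      · apply plane_ext
        all_goals
          simp only [PiLp.add_apply, PiLp.smul_apply, smul_eq_mul]
          field_simp
          simp only [orient]
          ring

/-- Rays from `a` and `b` on the same side of `ab` which do not meet give avoiding segments. -/
lemma avoid_of (a x b y : Plane) (h1 : 0 < orient a b x) (h2 : 0 < orient a b y)
    (h3 : (x 0 - a 0) * (y 1 - b 1) - (x 1 - a 1) * (y 0 - b 0) ≤ 0) :
    Avoiding a x b y := by
  right
  apply quad a b y x h1 _ h2 _
  · simp only [orient] at *; nlinarith
  · simp only [orient] at *; nlinarith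

lemma collinear_of (a b c : Plane) (hab : a ≠ b) (h : orient a b c = 0) :
    Collinear ℝ ({a, b, c} : Set Plane) := by
  rw [collinear_iff_of_mem (p₀ := a) (by simp)]
  refine ⟨b - a, ?_⟩
  simp only [orient] at h
  have hd : (b 0 - a 0) ^ 2 + (b 1 - a 1) ^ 2 ≠ 0 := by
    intro h0
    apply hab
    apply plane_ext
    · nlinarith [sq_nonneg (b 0 - a 0), sq_nonneg (b 1 - a 1)]
    · nlinarith [sq_nonneg (b 0 - a 0), sq_nonneg (b 1 - a 1)]
  intro p hp
  simp only [Set.mem_insert_iff, Set.mem_singleton_iff] at hp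
  rcases hp with rfl | rfl | rfl
  · exact ⟨0, by simp⟩
  · exact ⟨1, by simp⟩
  · refine ⟨((p 0 - a 0) * (b 0 - a 0) + (p 1 - a 1) * (b 1 - a 1)) /
      ((b 0 - a 0) ^ 2 + (b 1 - a 1) ^ 2), ?_⟩
    apply plane_ext
    · simp only [vadd_eq_add, PiLp.add_apply, PiLp.smul_apply, PiLp.sub_apply, smul_eq_mul]
      field_simp
      linear_combination (-(b 1 - a 1)) * h
    · simp only [vadd_eq_add, PiLp.add_apply, PiLp.smul_apply, PiLp.sub_apply, smul_eq_mul]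
      field_simp
      linear_combination (b 0 - a 0) * h

lemma exists_dir (a b : Plane) (h : a ≠ b) : ∃ θ, Dir a b θ := by
  set z : ℂ := ⟨b 0 - a 0, b 1 - a 1⟩ with hz
  have hz0 : z ≠ 0 := by
    intro h0
    have e0 := congrArg Complex.re h0
    have e1 := congrArg Complex.im h0
    simp only [hz, Complex.zero_re, Complex.zero_im] at e0 e1
    exact h (plane_ext (by linarith) (by linarith))
  refine ⟨Complex.arg z, ‖z‖, norm_pos_iff.2 hz0, ?_, ?_⟩
  · rw [Complex.norm_mul_cos_arg]
  · rw [Complex.norm_mul_sin_arg]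

lemma Dir.add_pi {a b : Plane} {θ : ℝ} (h : Dir a b θ) : Dir b a (θ + Real.pi) := by
  obtain ⟨r, hr, h0, h1⟩ := h
  refine ⟨r, hr, ?_, ?_⟩
  · rw [Real.cos_add_pi]; linarith
  · rw [Real.sin_add_pi]; linarith

lemma Dir.add_zmul {a b : Plane} {θ : ℝ} (h : Dir a b θ) (k : ℤ) :
    Dir a b (θ + k * (2 * Real.pi)) := by
  obtain ⟨r, hr, h0, h1⟩ := h
  exact ⟨r, hr, by rw [Real.cos_add_int_mul_two_pi]; exact h0,
    by rw [Real.sin_add_int_mul_two_pi]; exact h1⟩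

lemma Dir.ne {a b : Plane} {θ : ℝ} (h : Dir a b θ) : a ≠ b := by
  rintro rfl
  obtain ⟨r, hr, h0, h1⟩ := h
  have := Real.sin_sq_add_cos_sq θ
  have e0 : Real.cos θ = 0 := by
    have : r * Real.cos θ = 0 := by linarith
    rcases mul_eq_zero.1 this with h | h
    · linarith
    · exact h
  have e1 : Real.sin θ = 0 := by
    have : r * Real.sin θ = 0 := by linarith
    rcases mul_eq_zero.1 this with h | h
    · linarith
    · exact h
  rw [e0, e1] at this; norm_num at this

/-- cross product of two directed segments -/
lemma Dir.cross {a x b y : Plane} {α β : ℝ} (h : Dir a x α) (h' : Dir b y β) :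
    ∃ r : ℝ, 0 < r ∧
      (x 0 - a 0) * (y 1 - b 1) - (x 1 - a 1) * (y 0 - b 0) = r * Real.sin (β - α) := by
  obtain ⟨r, hr, h0, h1⟩ := h
  obtain ⟨r', hr', h0', h1'⟩ := h'
  refine ⟨r * r', by positivity, ?_⟩
  rw [h0, h1, h0', h1', Real.sin_sub]; ring

lemma Dir.dot {a x b y : Plane} {α β : ℝ} (h : Dir a x α) (h' : Dir b y β) :
    ∃ r : ℝ, 0 < r ∧
      (x 0 - a 0) * (y 0 - b 0) + (x 1 - a 1) * (y 1 - b 1) = r * Real.cos (β - α) := by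
  obtain ⟨r, hr, h0, h1⟩ := h
  obtain ⟨r', hr', h0', h1'⟩ := h'
  refine ⟨r * r', by positivity, ?_⟩
  rw [h0, h1, h0', h1', Real.cos_sub]; ring

/-- A segment cannot have two directions differing by an amount with cosine `≠ 1`. -/
lemma Dir.cos_sub {a x : Plane} {α β : ℝ} (h : Dir a x α) (h' : Dir a x β) :
    Real.cos (β - α) = 1 := by
  obtain ⟨r, hr, e⟩ := h.cross h'
  obtain ⟨r', hr', e'⟩ := h.dot h'
  have hs : Real.sin (β - α) = 0 := by
    have : r * Real.sin (β - α) = 0 := by rw [← e]; ring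
    rcases mul_eq_zero.1 this with h | h
    · linarith
    · exact h
  have hc : 0 ≤ Real.cos (β - α) := by
    have : 0 ≤ r' * Real.cos (β - α) := by rw [← e']; nlinarith [sq_nonneg (x 0 - a 0), sq_nonneg (x 1 - a 1)]
    exact nonneg_of_mul_nonneg_right this hr'
  have := Real.sin_sq_add_cos_sq (β - α)
  rw [hs] at this
  nlinarith

lemma Dir.eq_of_lt {a x : Plane} {α β : ℝ} (h : Dir a x α) (h' : Dir a x β)
    (h1 : α < β) (h2 : β < α + 2 * Real.pi) : False := by
  have hc := h.cos_sub h'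
  rw [Real.cos_eq_one_iff] at hc
  obtain ⟨k, hk⟩ := hc
  have hp := Real.pi_pos
  have k0 : (0 : ℝ) < k := by
    by_contra hn
    push Not at hn
    nlinarith
  have k1 : (k : ℝ) < 1 := by
    by_contra hn
    push Not at hn
    nlinarith
  have k0' : 0 < k := by exact_mod_cast k0
  have k1' : k < 1 := by exact_mod_cast k1
  omega

/-- Davenport-Schinzel bound: the number of changes in a word with no `abab`. -/
lemma ds_bound {α : Type*} [DecidableEq α] (w : ℕ → α) (N : ℕ) (S : Finset α)
    (hS : ∀ i ≤ N, w i ∈ S)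
    (hw : ∀ i j k l, i < j → j < k → k < l → l ≤ N → w i = w k → w j = w l → w i = w j) :
    ((Finset.range N).filter (fun i => w i ≠ w (i + 1))).card ≤ 2 * S.card - 2 := by
  set F1 := (Finset.range N).filter (fun i => ∀ j ≤ i, w j ≠ w (i + 1)) with hF1
  set F2 := (Finset.range N).filter (fun i => ∀ j ≤ N, i < j → w j ≠ w i) with hF2
  have hsub : (Finset.range N).filter (fun i => w i ≠ w (i + 1)) ⊆ F1 ∪ F2 := by
    intro i hi
    simp only [hF1, hF2, Finset.mem_filter, Finset.mem_range, Finset.mem_union] at *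
    by_contra hcon
    push Not at hcon
    obtain ⟨j, hj, hj'⟩ := hcon.1 hi.1
    obtain ⟨l, hl, hl', hl''⟩ := hcon.2 hi.1
    have hji : j < i := lt_of_le_of_ne hj (by rintro rfl; exact hi.2 hj')
    have hil : i + 1 < l := lt_of_le_of_ne hl' (by rintro rfl; exact hi.2 hl''.symm)
    have := hw j i (i + 1) l hji (by omega) hil hl hj' hl''.symm
    exact hi.2 (this.symm.trans hj')
  have c1 : F1.card ≤ (S.erase (w 0)).card := by
    apply Finset.card_le_card_of_injOn (fun i => w (i + 1))
    · intro i hi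
      simp only [hF1, Finset.coe_filter, Finset.mem_range, Set.mem_ofPred_eq] at hi
      simp only [Finset.coe_erase, Set.mem_sdiff, Finset.mem_coe, Set.mem_singleton_iff]
      exact ⟨hS _ (by omega), fun h => hi.2 0 (by omega) h.symm⟩
    · intro i hi j hj hij
      simp only [hF1, Finset.coe_filter, Finset.mem_range, Set.mem_ofPred_eq] at hi hj hij
      rcases lt_trichotomy i j with h | h | h
      · exact absurd hij (hj.2 (i + 1) (by omega))
      · exact h
      · exact absurd hij.symm (hi.2 (j + 1) (by omega))
  have c2 : F2.card ≤ (S.erase (w N)).card := by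
    apply Finset.card_le_card_of_injOn (fun i => w i)
    · intro i hi
      simp only [hF2, Finset.coe_filter, Finset.mem_range, Set.mem_ofPred_eq] at hi
      simp only [Finset.coe_erase, Set.mem_sdiff, Finset.mem_coe, Set.mem_singleton_iff]
      exact ⟨hS _ (by omega), fun h => hi.2 N (by omega) (by omega) h.symm⟩
    · intro i hi j hj hij
      simp only [hF2, Finset.coe_filter, Finset.mem_range, Set.mem_ofPred_eq] at hi hj hij
      rcases lt_trichotomy i j with h | h | h
      · exact absurd hij.symm (hi.2 j (by omega) (by omega))
      · exact h
      · exact absurd hij (hj.2 i (by omega) (by omega))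
  rw [Finset.card_erase_of_mem (hS _ (by omega))] at c1 c2
  have := (Finset.card_le_card hsub).trans (Finset.card_union_le _ _)
  omega

/-- A word where position `i` or `i + m` always is a change has at least `m` changes. -/
lemma changes_ge {α : Type*} [DecidableEq α] (w : ℕ → α) (m : ℕ)
    (h : ∀ i < m, w i = w (i + 1) → w (i + m) ≠ w (i + m + 1)) :
    m ≤ ((Finset.range (2 * m)).filter (fun i => w i ≠ w (i + 1))).card := by
  conv_lhs => rw [← Finset.card_range m]
  apply Finset.card_le_card_of_injOn (fun i => if w i = w (i + 1) then i + m else i)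
  · intro i hi
    simp only [Finset.coe_range, Set.mem_Iio] at hi
    simp only [Finset.coe_filter, Finset.mem_range, Set.mem_ofPred_eq]
    split_ifs with hc
    · exact ⟨by omega, h i hi hc⟩
    · exact ⟨by omega, hc⟩
  · intro i hi j hj hij
    simp only [Finset.coe_range, Set.mem_Iio] at hi hj hij
    split_ifs at hij <;> omega

lemma mem_of_edge (P : Finset Plane) (E : Finset (Sym2 Plane))
    (hE : ∀ e ∈ E, ∃ a b : Plane, a ∈ P ∧ b ∈ P ∧ a ≠ b ∧ e = s(a, b))
    {a b : Plane} (h : s(a, b) ∈ E) : a ∈ P ∧ b ∈ P := by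
  obtain ⟨c, d, hc, hd, -, he⟩ := hE _ h
  rw [Sym2.eq_iff] at he
  rcases he with ⟨rfl, rfl⟩ | ⟨rfl, rfl⟩
  · exact ⟨hc, hd⟩
  · exact ⟨hd, hc⟩

/-- What we use about the graph: general position and absence of avoiding edges,
expressed through orientations. -/
structure Good (P : Finset Plane) (E : Finset (Sym2 Plane)) : Prop where
  mem : ∀ a b, s(a, b) ∈ E → a ∈ P ∧ b ∈ P
  gen : ∀ a ∈ P, ∀ b ∈ P, ∀ c ∈ P, a ≠ b → a ≠ c → b ≠ c → orient a b c ≠ 0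
  avo : ∀ a x b y, s(a, x) ∈ E → s(b, y) ∈ E → 0 < orient a b x → 0 < orient a b y →
    0 < (x 0 - a 0) * (y 1 - b 1) - (x 1 - a 1) * (y 0 - b 0)

lemma Good.avo' {P : Finset Plane} {E : Finset (Sym2 Plane)} (G : Good P E) (a x b y : Plane)
    (h1 : s(a, x) ∈ E) (h2 : s(b, y) ∈ E) (h3 : orient a b x < 0) (h4 : orient a b y < 0) :
    (x 0 - a 0) * (y 1 - b 1) - (x 1 - a 1) * (y 0 - b 0) < 0 := by
  have := G.avo b y a x h2 h1 (by simp only [orient] at *; nlinarith)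
    (by simp only [orient] at *; nlinarith)
  nlinarith

/-- Orientation of `a, b, x` in terms of the angles. -/
lemma orient_dir {a b x : Plane} {φ α : ℝ} (h : Dir a b φ) (h' : Dir a x α) :
    ∃ r : ℝ, 0 < r ∧ orient a b x = r * Real.sin (α - φ) := h.cross h'

lemma orient_dir' {a b y : Plane} {φ β : ℝ} (h : Dir a b φ) (h' : Dir b y β) :
    ∃ r : ℝ, 0 < r ∧ orient a b y = r * Real.sin (β - φ) := by
  obtain ⟨r, hr, e⟩ := h.cross h'
  refine ⟨r, hr, ?_⟩
  rw [← e]; simp only [orient]; ring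

lemma core {P : Finset Plane} {E : Finset (Sym2 Plane)} (G : Good P E) {a b x y z : Plane}
    {φ α β γ : ℝ} (hx : s(a, x) ∈ E) (hy : s(b, y) ∈ E) (hz : s(b, z) ∈ E)
    (hab : Dir a b φ) (hax : Dir a x α) (hby : Dir b y β) (hbz : Dir b z γ)
    (h1 : φ ≤ β) (h2 : β < α) (h3 : α < γ) (h4 : γ < φ + 2 * Real.pi) : False := by
  have hp := Real.pi_pos
  obtain ⟨r1, hr1, e1⟩ := orient_dir hab hax
  obtain ⟨r2, hr2, e2⟩ := orient_dir' hab hby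
  obtain ⟨r3, hr3, e3⟩ := orient_dir' hab hbz
  rcases lt_trichotomy α (φ + Real.pi) with h | h | h
  · rcases h1.lt_or_eq with h1 | rfl
    · have := G.avo a x b y hx hy
        (by rw [e1]; exact mul_pos hr1 (Real.sin_pos_of_pos_of_lt_pi (by linarith) (by linarith)))
        (by rw [e2]; exact mul_pos hr2 (Real.sin_pos_of_pos_of_lt_pi (by linarith) (by linarith)))
      obtain ⟨r, hr, e⟩ := hax.cross hby
      rw [e] at this
      have := mul_neg_of_pos_of_neg hr
        (Real.sin_neg_of_neg_of_neg_pi_lt (x := β - α) (by linarith) (by linarith))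
      linarith
    · have ho : orient a b y = 0 := by rw [e2]; simp
      by_cases hya : y = a
      · subst hya
        exact Dir.eq_of_lt hby hab.add_pi (by linarith) (by linarith)
      · exact G.gen a (G.mem _ _ hx).1 b (G.mem _ _ hy).1 y (G.mem _ _ hy).2 hab.ne
          (Ne.symm hya) hby.ne ho
  · have ho : orient a b x = 0 := by rw [e1, h]; simp
    by_cases hxb : x = b
    · subst hxb
      exact Dir.eq_of_lt hab hax (by linarith) (by linarith)
    · exact G.gen a (G.mem _ _ hx).1 b (G.mem _ _ hy).1 x (G.mem _ _ hx).2 hab.ne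
        hax.ne (Ne.symm hxb) ho
  · have hneg : ∀ t, Real.pi < t → t < 2 * Real.pi → Real.sin t < 0 := by
      intro t h h'
      rw [← Real.sin_sub_two_pi]
      exact Real.sin_neg_of_neg_of_neg_pi_lt (by linarith) (by linarith)
    have := G.avo' a x b z hx hz
        (by rw [e1]; exact mul_neg_of_pos_of_neg hr1 (hneg _ (by linarith) (by linarith)))
        (by rw [e3]; exact mul_neg_of_pos_of_neg hr3 (hneg _ (by linarith) (by linarith)))
    obtain ⟨r, hr, e⟩ := hax.cross hbz
    rw [e] at this
    have := mul_pos hr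
      (Real.sin_pos_of_pos_of_lt_pi (x := γ - α) (by linarith) (by linarith))
    linarith

lemma Dir.two {a b : Plane} {θ : ℝ} (h : Dir a b θ) : Dir a b (θ + 2 * Real.pi) := by
  have := h.add_zmul 1
  simpa using this

lemma no_abab {P : Finset Plane} {E : Finset (Sym2 Plane)} (G : Good P E)
    {a b x1 x2 x3 x4 : Plane} {t1 t2 t3 t4 : ℝ} (hab : a ≠ b)
    (e1 : s(a, x1) ∈ E) (e2 : s(b, x2) ∈ E) (e3 : s(a, x3) ∈ E) (e4 : s(b, x4) ∈ E)
    (d1 : Dir a x1 t1) (d2 : Dir b x2 t2) (d3 : Dir a x3 t3) (d4 : Dir b x4 t4)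
    (h1 : t1 < t2) (h2 : t2 < t3) (h3 : t3 < t4) (h4 : t4 < t1 + 2 * Real.pi) : False := by
  obtain ⟨φ0, hφ0⟩ := exists_dir a b hab
  obtain ⟨φ, hφ, hlo, hhi⟩ : ∃ φ, Dir a b φ ∧ t4 - 2 * Real.pi < φ ∧ φ ≤ t4 := by
    have hp : 0 < 2 * Real.pi := by positivity
    have hm := toIocMod_mem_Ioc hp (t4 - 2 * Real.pi) φ0
    refine ⟨_, ?_, hm.1, by linarith [hm.2]⟩
    have := hφ0.add_zmul (-toIocDiv hp (t4 - 2 * Real.pi) φ0)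
    have e := self_sub_toIocDiv_zsmul hp (t4 - 2 * Real.pi) φ0
    rw [← e, zsmul_eq_mul, sub_eq_add_neg, ← neg_mul]
    push_cast at this
    exact this
  by_cases c : φ ≤ t2
  · exact core G e3 e2 e4 hφ d3 d2 d4 c h2 h3 (by linarith)
  · push Not at c
    exact core G e1 e4 e2 hφ d1.two d4 d2.two hhi h4 (by linarith) (by linarith)

lemma exists_up {a b : Plane} (h : a ≠ b) :
    ∃ c d θ, s(a, b) = s(c, d) ∧ Dir c d θ ∧ 0 ≤ θ ∧ θ < Real.pi := by
  obtain ⟨φ, hφ⟩ := exists_dir a b h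
  have hp : 0 < 2 * Real.pi := by positivity
  have hm := toIcoMod_mem_Ico hp 0 φ
  have hd := hφ.add_zmul (-toIcoDiv hp 0 φ)
  have e := self_sub_toIcoDiv_zsmul hp 0 φ
  rw [zsmul_eq_mul, sub_eq_add_neg, ← neg_mul] at e
  push_cast at hd
  rw [e] at hd
  set ψ := toIcoMod hp 0 φ
  rw [Set.mem_Ico] at hm
  by_cases hc : ψ < Real.pi
  · exact ⟨a, b, ψ, rfl, hd, hm.1, hc⟩
  · push Not at hc
    refine ⟨b, a, ψ - Real.pi, Sym2.eq_swap, ?_, by linarith, by linarith⟩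
    have := hd.add_pi.add_zmul (-1)
    convert this using 1
    push_cast; ring

/-- Two edges with the same direction are equal. -/
lemma same_dir {P : Finset Plane} {E : Finset (Sym2 Plane)} (G : Good P E)
    {a x b y : Plane} {θ : ℝ} (h1 : s(a, x) ∈ E) (h2 : s(b, y) ∈ E)
    (d1 : Dir a x θ) (d2 : Dir b y θ) : s(a, x) = s(b, y) := by
  have hp := Real.pi_pos
  obtain ⟨r, hr, e⟩ := d1.cross d2
  rw [sub_self, Real.sin_zero, mul_zero] at e
  by_cases hab : a = b
  · subst hab
    by_cases hxy : x = y
    · rw [hxy]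
    · exact absurd e (G.gen a (G.mem _ _ h1).1 x (G.mem _ _ h1).2 y (G.mem _ _ h2).2 d1.ne
        d2.ne hxy)
  · exfalso
    obtain ⟨φ, hφ⟩ := exists_dir a b hab
    obtain ⟨r1, hr1, e1⟩ := orient_dir hφ d1
    obtain ⟨r2, hr2, e2⟩ := orient_dir' hφ d2
    rcases lt_trichotomy (Real.sin (θ - φ)) 0 with h | h | h
    · have := G.avo' a x b y h1 h2 (by rw [e1]; exact mul_neg_of_pos_of_neg hr1 h)
        (by rw [e2]; exact mul_neg_of_pos_of_neg hr2 h)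
      linarith
    · rw [h, mul_zero] at e1 e2
      have hxb : x = b := by
        by_contra hxb
        exact G.gen a (G.mem _ _ h1).1 b (G.mem _ _ h2).1 x (G.mem _ _ h1).2 hab d1.ne
          (Ne.symm hxb) e1
      have hya : y = a := by
        by_contra hya
        exact G.gen a (G.mem _ _ h1).1 b (G.mem _ _ h2).1 y (G.mem _ _ h2).2 hab
          (Ne.symm hya) d2.ne e2
      subst hxb hya
      exact Dir.eq_of_lt d2 d1.add_pi (by linarith) (by linarith)
    · have := G.avo a x b y h1 h2 (by rw [e1]; exact mul_pos hr1 h)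
        (by rw [e2]; exact mul_pos hr2 h)
      linarith

/-- The bi-infinite (here one-sided) periodic enumeration of directed edges by angle. -/
lemma exists_seq {P : Finset Plane} {E : Finset (Sym2 Plane)} (G : Good P E)
    (hne : ∀ a b, s(a, b) ∈ E → a ≠ b) (hpos : 0 < E.card) :
    ∃ (t h : ℕ → Plane) (Θ : ℕ → ℝ), StrictMono Θ ∧
      (∀ i, Θ (i + E.card) = Θ i + Real.pi) ∧ (∀ i, t (i + E.card) = h i) ∧
      (∀ i, h (i + E.card) = t i) ∧ (∀ i, Dir (t i) (h i) (Θ i)) ∧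
      (∀ i, s(t i, h i) ∈ E) := by
  classical
  have key : ∀ e : E, ∃ c d θ, (e : Sym2 Plane) = s(c, d) ∧ Dir c d θ ∧ 0 ≤ θ ∧ θ < Real.pi := by
    rintro ⟨e, he⟩
    induction e using Sym2.ind with
    | _ a b => exact exists_up (hne a b he)
  choose c d θ hcd hdir h0 hpi using key
  have hinj : Function.Injective θ := by
    intro e f hef
    apply Subtype.ext
    rw [hcd e, hcd f]
    have d1 := hdir e
    rw [hef] at d1
    exact same_dir G (hcd e ▸ e.2) (hcd f ▸ f.2) d1 (hdir f)
  set m := E.card with hm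
  set T : Finset ℝ := Finset.univ.image θ with hT
  have hTc : T.card = m := by
    rw [hT, Finset.card_image_of_injective _ hinj, Finset.card_univ, Fintype.card_coe]
  have hg : ∀ i : Fin m, ∃ e : E, θ e = T.orderEmbOfFin hTc i := by
    intro i
    have := T.orderEmbOfFin_mem hTc i
    obtain ⟨e, -, he⟩ := Finset.mem_image.1 this
    exact ⟨e, he⟩
  choose g hg using hg
  let ix : ℕ → E := fun i => g ⟨i % m, Nat.mod_lt _ hpos⟩
  have ix_add : ∀ i, ix (i + m) = ix i := by
    intro i; simp only [ix, Nat.add_mod_right]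
  have div_add : ∀ i, (i + m) / m = i / m + 1 := fun i => Nat.add_div_right i hpos
  have hlt : ∀ i j, i % m < j % m → θ (ix i) < θ (ix j) := by
    intro i j hij
    simp only [ix, hg]
    exact (T.orderEmbOfFin hTc).strictMono hij
  refine ⟨fun i => if Even (i / m) then c (ix i) else d (ix i),
    fun i => if Even (i / m) then d (ix i) else c (ix i),
    fun i => θ (ix i) + (i / m : ℕ) * Real.pi, ?_, ?_, ?_, ?_, ?_, ?_⟩
  · apply strictMono_nat_of_lt_succ
    intro i
    have hp := Real.pi_pos
    by_cases hc : i % m + 1 < m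
    · have e1 : (i + 1) / m = i / m := by
        have hdm := Nat.div_add_mod i m
        exact ((Nat.div_mod_unique hpos (c := i % m + 1) (d := i / m)).2 ⟨by omega, hc⟩).1
      have e2 : (i + 1) % m = i % m + 1 := by
        rw [Nat.add_mod, Nat.mod_eq_of_lt (a := 1) (by omega), Nat.mod_eq_of_lt hc]
      rw [e1]
      have := hlt i (i + 1) (by omega)
      linarith
    · have hl := Nat.mod_lt i hpos
      have e1 : (i + 1) / m = i / m + 1 := by
        have : i + 1 = m * (i / m + 1) := by
          have := Nat.div_add_mod i m
          rw [mul_add]; omega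
        rw [this, Nat.mul_div_cancel_left _ hpos]
      rw [e1]
      push_cast
      have := hpi (ix i)
      have := h0 (ix (i + 1))
      linarith
  · intro i
    simp only [ix_add, div_add]; push_cast; ring
  · intro i
    simp only [ix_add, div_add, Nat.even_add_one]
    by_cases hc : Even (i / m)
    · rw [if_neg (not_not.2 hc), if_pos hc]
    · rw [if_pos hc, if_neg hc]
  · intro i
    simp only [ix_add, div_add, Nat.even_add_one]
    by_cases hc : Even (i / m)
    · rw [if_neg (not_not.2 hc), if_pos hc]
    · rw [if_pos hc, if_neg hc]
  · intro i
    dsimp only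
    split_ifs with hc
    · obtain ⟨k, hk⟩ := hc
      convert (hdir (ix i)).add_zmul k using 1
      rw [hk]; push_cast; ring
    · obtain ⟨k, hk⟩ := Nat.not_even_iff_odd.1 hc
      convert (hdir (ix i)).add_pi.add_zmul k using 1
      rw [hk]; push_cast; ring
  · intro i
    dsimp only
    have := (ix i).2
    rw [hcd (ix i)] at this
    split_ifs
    · exact this
    · rw [Sym2.eq_swap]; exact this

/-- **Theorem (Kupitz–Perles / Valtr).** A geometric graph on `n` points in general
position (no three collinear) with no two avoiding edges has at most `2n - 2` edges. -/
theorem geometric_graph_no_avoiding_edges (n : ℕ) (P : Finset Plane) (hcard : P.card = n)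
    (hgen : ∀ a ∈ P, ∀ b ∈ P, ∀ c ∈ P, a ≠ b → a ≠ c → b ≠ c →
      ¬ Collinear ℝ ({a, b, c} : Set Plane))
    (E : Finset (Sym2 Plane))
    (hE : ∀ e ∈ E, ∃ a b : Plane, a ∈ P ∧ b ∈ P ∧ a ≠ b ∧ e = s(a, b))
    (havoid : ∀ a b c d : Plane, s(a, b) ∈ E → s(c, d) ∈ E → ¬ Avoiding a b c d) :
    E.card ≤ 2 * n - 2 := by
  classical
  subst hcard
  have G : Good P E := by
    refine ⟨fun a b h => mem_of_edge P E hE h, ?_, ?_⟩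
    · intro a ha b hb c hc hab hac hbc h0
      exact hgen a ha b hb c hc hab hac hbc (collinear_of a b c hab h0)
    · intro a x b y hx hy h1 h2
      by_contra hcon
      exact havoid a x b y hx hy (avoid_of a x b y h1 h2 (not_lt.1 hcon))
  have hne : ∀ a b, s(a, b) ∈ E → a ≠ b := by
    intro a b h hab
    obtain ⟨c, d, -, -, hcd, he⟩ := hE _ h
    rw [Sym2.eq_iff] at he
    rcases he with ⟨rfl, rfl⟩ | ⟨rfl, rfl⟩
    · exact hcd hab
    · exact hcd hab.symm
  rcases Nat.eq_zero_or_pos E.card with h0 | hpos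
  · omega
  obtain ⟨t, h, Θ, hmono, hΘ, ht, hh, hdir, hmem⟩ := exists_seq G hne hpos
  have hΘ2 : ∀ i, Θ (i + 2 * E.card) = Θ i + 2 * Real.pi := by
    intro i
    rw [two_mul, ← add_assoc, hΘ, hΘ]; ring
  have ht2 : ∀ i, t (i + 2 * E.card) = t i := by
    intro i
    rw [two_mul, ← add_assoc, ht, hh]
  refine (changes_ge t E.card ?_).trans
    (ds_bound t (2 * E.card) P (fun i _ => (G.mem _ _ (hmem i)).1) ?_)
  · intro i hi e1 e2
    rw [ht, show i + E.card + 1 = (i + 1) + E.card by ring, ht] at e2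
    have d1 := hdir i
    rw [e1, e2] at d1
    refine Dir.eq_of_lt d1 (hdir (i + 1)) (hmono (by omega)) ?_
    rw [← hΘ2]
    exact hmono (by omega)
  · intro i j k l hij hjk hkl hl e1 e2
    by_contra hab
    have hl' : l < i + 2 * E.card := by
      by_contra hcon
      have hi : i = 0 := by omega
      have hl2 : l = 0 + 2 * E.card := by omega
      rw [hl2, ht2] at e2
      rw [hi] at hab
      exact hab e2.symm
    have m3 := hmem k
    have m4 := hmem l
    have d3 := hdir k
    have d4 := hdir l
    rw [← e1] at m3 d3
    rw [← e2] at m4 d4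
    refine no_abab G hab (hmem i) (hmem j) m3 m4 (hdir i) (hdir j) d3 d4 (hmono hij) (hmono hjk)
      (hmono hkl) ?_
    rw [← hΘ2]
    exact hmono hl'
end
end
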